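/- arXiv:0903.3395 — 2 statements merged into one kernel-verified Lean document; each statement's English description precedes it below -/
import Mathlib

section
/- For all positive integers m and n and every m-homogeneous polynomial P(z) = ∑_{|α|=m} a_α z^α on ℂ^n, one has (∑_{|α|=m} |a_α|^{2m/(m+1)})^{(m+1)/(2m)} ≤ (√2)^{m-1} · √m · (m^m/m!) · sup_{z ∈ 𝔻^n} |∑_{|α|=m} a_α z^α|. (Bohnenblust–Hille polynomial inequality with the explicit constant obtained in the paper's proof.) -/
open Finset

/-- Evaluation of the `m`-homogeneous polynomial on `ℂ^n` with coefficient family `a`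
(indexed by the multi-indices `α` with `|α| = m`) at the point `z`. -/
noncomputable def mhEval (n m : ℕ) (a : (Fin n → ℕ) → ℂ) (z : Fin n → ℂ) : ℂ :=
  ∑ α ∈ Finset.Nat.antidiagonalTuple n m, a α * ∏ i, z i ^ α i

/-- The supremum of `|P(z)|` over the open unit polydisc `𝔻^n`. -/
noncomputable def polydiscSup (n m : ℕ) (a : (Fin n → ℕ) → ℂ) : ℝ :=
  sSup {x : ℝ | ∃ z : Fin n → ℂ, (∀ i, ‖z i‖ < 1) ∧ x = ‖mhEval n m a z‖}

/-!
Write `m = k + 1`. A Blei-type inequality (weighted AM-GM followed by Hölder) bounds the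
`ℓ^{2m/(m+1)}`-norm of the coefficients of `P` by the sum over `j` of `ℓ²`-norms of slices, and the
`j`-th slice is controlled by the coefficients of `∂P/∂z_j`. By Parseval its `ℓ²`-norm is an
`L²`-norm over the torus. For a `k`-homogeneous `Q` the `L²`- and `L¹`-norms are comparable:
Parseval for `Q²` gives `‖Q‖₄⁴ ≤ C(2k, k) ‖Q‖₂⁴`, because a multi-index of order `2k` splits into
two of order `k` in at most `C(2k, k)` ways, and interpolating between `L¹` and `L⁴` gives
`‖Q‖₂ ≤ √C(2k, k) ‖Q‖₁`. The sum over `j` can now be taken inside the `L¹`-norm, where Cauchy's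
estimate on discs in the direction of unimodular vectors bounds `∑ j, |∂P/∂z_j|` by a multiple of
the supremum of `|P|`.
-/

open scoped ComplexConjugate BigOperators

section MultiIndex

variable {ι : Type*} [Fintype ι] [DecidableEq ι]

lemma mem_piAntidiag_univ {α : ι → ℕ} {m : ℕ} : α ∈ piAntidiag univ m ↔ ∑ i, α i = m := by
  simp

lemma sum_filter_le_piAntidiag {M : Type*} [AddCommMonoid M] (β : ι → ℕ) (l : ℕ)
    (g : (ι → ℕ) → M) :
    ∑ α ∈ piAntidiag univ (∑ i, β i + l) with ∀ i, β i ≤ α i, g α =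
      ∑ γ ∈ piAntidiag univ l, g (β + γ) := by
  refine (sum_nbij' (β + ·) (· - β) ?_ ?_ ?_ ?_ ?_).symm
  · intro γ hγ
    simp_all [sum_add_distrib]
  · intro α hα
    obtain ⟨hsum, hle⟩ := mem_filter.1 hα
    rw [mem_piAntidiag_univ] at hsum ⊢
    simp only [Pi.sub_apply, sum_tsub_distrib _ fun i _ => hle i, hsum, add_tsub_cancel_left]
  · intro γ _
    exact add_tsub_cancel_left β γ
  · intro α hα
    exact funext fun i => add_tsub_cancel_of_le ((mem_filter.1 hα).2 i)
  · intro γ _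
    rfl

lemma sum_piAntidiag_succ_eq_sum_add_single {M : Type*} [AddCommMonoid M] (k : ℕ) (j : ι)
    (g : (ι → ℕ) → M) (hg : ∀ α, α j = 0 → g α = 0) :
    ∑ α ∈ piAntidiag univ (k + 1), g α = ∑ β ∈ piAntidiag univ k, g (β + Pi.single j 1) := by
  have hle (α : ι → ℕ) (hα : g α ≠ 0) (i : ι) : (Pi.single j 1 : ι → ℕ) i ≤ α i := by
    rcases eq_or_ne i j with rfl | hij
    · simpa [Nat.one_le_iff_ne_zero] using mt (hg α) hα
    · simp [hij]
  rw [← sum_filter_of_ne fun α _ => hle α]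
  simpa [add_comm] using sum_filter_le_piAntidiag (Pi.single j 1) k g

lemma sum_sum_piAntidiag_eq_sum_piAntidiag_add {M : Type*} [AddCommMonoid M] (k l : ℕ)
    (f : (ι → ℕ) → (ι → ℕ) → M) :
    ∑ β ∈ piAntidiag univ k, ∑ γ ∈ piAntidiag univ l, f β γ =
      ∑ α ∈ piAntidiag univ (k + l), ∑ β ∈ piAntidiag univ k with ∀ i, β i ≤ α i, f β (α - β) := by
  simp_rw [sum_filter (s := piAntidiag univ k)]
  refine .trans (sum_congr rfl fun β hβ => ?_) sum_comm
  rw [← sum_filter, ← mem_piAntidiag_univ.1 hβ, sum_filter_le_piAntidiag]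
  simp only [add_tsub_cancel_left]

lemma card_filter_le_piAntidiag_le_choose (α : ι → ℕ) (k : ℕ) :
    #{β ∈ piAntidiag univ k | ∀ i, β i ≤ α i} ≤ (∑ i, α i).choose k := by
  -- Identify a multi-index with a multiset; distinct `β ≤ α` are distinct `k`-submultisets of `α`.
  let toMultiset (β : ι → ℕ) : Multiset ι := Finsupp.toMultiset (Finsupp.equivFunOnFinite.symm β)
  have count_toMultiset (β : ι → ℕ) (i : ι) : (toMultiset β).count i = β i := by
    simp [toMultiset]
  have card_toMultiset (β : ι → ℕ) : (toMultiset β).card = ∑ i, β i := by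
    simp [toMultiset, Finsupp.sum_fintype]
  calc #{β ∈ piAntidiag univ k | ∀ i, β i ≤ α i}
      ≤ #((toMultiset α).powersetCard k).toFinset := by
        refine card_le_card_of_injOn toMultiset (fun β hβ => ?_) fun β _ γ _ h => ?_
        · obtain ⟨hβk, hβα⟩ : ∑ i, β i = k ∧ ∀ i, β i ≤ α i := by simpa using hβ
          simp only [mem_coe, Multiset.mem_toFinset, Multiset.mem_powersetCard,
            Multiset.le_iff_count, count_toMultiset, card_toMultiset]
          exact ⟨hβα, hβk⟩
        · funext i
          rw [← count_toMultiset β, h, count_toMultiset]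
    _ ≤ (∑ i, α i).choose k := by
        rw [← card_toMultiset, ← Multiset.card_powersetCard]
        exact Multiset.toFinset_card_le _

lemma sum_piAntidiag_prod_pow_le_sum_pow {x : ι → ℝ} (hx : ∀ i, 0 ≤ x i) (m : ℕ) :
    ∑ α ∈ piAntidiag univ m, ∏ i, x i ^ α i ≤ (∑ i, x i) ^ m := by
  rw [sum_pow_eq_sum_piAntidiag]
  gcongr with α
  exact le_mul_of_one_le_left (prod_nonneg fun i _ => pow_nonneg (hx i) _)
    (mod_cast Nat.multinomial_pos _ _)

end MultiIndex

section Blei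

lemma one_le_prod_rpow_mul_sum_div {ι : Type*} (s : Finset ι) (w z : ι → ℝ)
    (hw : ∀ i ∈ s, 0 ≤ w i) (hw_sum : ∑ i ∈ s, w i = 1) (hz : ∀ i ∈ s, 0 ≤ z i)
    (hz_ne : ∀ i ∈ s, w i ≠ 0 → z i ≠ 0) :
    1 ≤ (∏ i ∈ s, z i ^ w i) * ∑ i ∈ s, w i / z i := by
  -- Weighted AM-GM for the reciprocals of the `z i`.
  have amgm := Real.geom_mean_le_arith_mean_weighted s w (fun i => (z i)⁻¹) hw hw_sum
    fun i hi => inv_nonneg.2 (hz i hi)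
  simp only [← div_eq_mul_inv] at amgm
  calc (1 : ℝ) = (∏ i ∈ s, z i ^ w i) * ∏ i ∈ s, (z i)⁻¹ ^ w i := by
        rw [← prod_mul_distrib]
        refine (prod_eq_one fun i hi => ?_).symm
        rw [← Real.mul_rpow (hz i hi) (inv_nonneg.2 (hz i hi))]
        rcases eq_or_ne (w i) 0 with hwi | hwi
        · rw [hwi, Real.rpow_zero]
        · rw [mul_inv_cancel₀ (hz_ne i hi hwi), Real.one_rpow]
    _ ≤ (∏ i ∈ s, z i ^ w i) * ∑ i ∈ s, w i / z i :=
        mul_le_mul_of_nonneg_left amgm (prod_nonneg fun i hi => Real.rpow_nonneg (hz i hi) _)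

lemma sqrt_prod_rpow_div_rpow_two_mul {ι : Type*} [Fintype ι] {m : ℕ} (hm : m ≠ 0) {x : ι → ℝ}
    (hx : ∀ j, 0 ≤ x j) (α : ι → ℕ) :
    √(∏ j, x j ^ (α j / m : ℝ)) ^ (2 * m : ℝ) = ∏ j, x j ^ α j := by
  have hfactor (j : ι) : 0 ≤ x j ^ (α j / m : ℝ) := Real.rpow_nonneg (hx j) _
  rw [Real.rpow_mul (Real.sqrt_nonneg _), Real.rpow_two,
    Real.sq_sqrt (prod_nonneg fun j _ => hfactor j),
    ← Real.finsetProd_rpow _ _ fun j _ => hfactor j]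
  refine prod_congr rfl fun j _ => ?_
  rw [← Real.rpow_mul (hx j), div_mul_cancel₀ _ (Nat.cast_ne_zero.2 hm), Real.rpow_natCast]

variable {ι : Type*} [Fintype ι] [DecidableEq ι]

/-- The `ℓ²`-norm of the `j`-th slice of a family `b` indexed by multi-indices of order `m`. The
weight `α j / m` is the proportion of tuples `(i₁, …, i_m)` with `i₁ = j` among those representing
`α`, so this is the slice `i₁ = j` of the symmetric array obtained by spreading each `b α ^ 2`
evenly over these tuples; Blei's inequality bounds `b` by its slices. -/
noncomputable def sliceNorm (m : ℕ) (b : (ι → ℕ) → ℝ) (j : ι) : ℝ :=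
  √(∑ α ∈ piAntidiag univ m, (α j / m : ℝ) * b α ^ 2)

lemma sliceNorm_nonneg (m : ℕ) (b : (ι → ℕ) → ℝ) (j : ι) : 0 ≤ sliceNorm m b j :=
  Real.sqrt_nonneg _

lemma sliceNorm_sq (m : ℕ) (b : (ι → ℕ) → ℝ) (j : ι) :
    sliceNorm m b j ^ 2 = ∑ α ∈ piAntidiag univ m, (α j / m : ℝ) * b α ^ 2 :=
  Real.sq_sqrt (sum_nonneg fun _ _ => by positivity)

lemma sum_sum_div_sliceNorm (m : ℕ) (b : (ι → ℕ) → ℝ) :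
    ∑ α ∈ piAntidiag univ m, b α ^ 2 * ∑ j, (α j / m : ℝ) / sliceNorm m b j =
      ∑ j, sliceNorm m b j := by
  simp_rw [mul_sum]
  rw [sum_comm]
  refine sum_congr rfl fun j _ => ?_
  calc ∑ α ∈ piAntidiag univ m, b α ^ 2 * ((α j / m : ℝ) / sliceNorm m b j)
      = sliceNorm m b j ^ 2 / sliceNorm m b j := by
        rw [sliceNorm_sq, sum_div]
        exact sum_congr rfl fun α _ => by ring
    _ = sliceNorm m b j := by rw [sq, mul_self_div_self]

lemma sliceNorm_ne_zero {m : ℕ} {b : (ι → ℕ) → ℝ} {α : ι → ℕ} {j : ι} (hm : m ≠ 0)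
    (hα : α ∈ piAntidiag univ m) (hb : b α ≠ 0) (hj : α j ≠ 0) : sliceNorm m b j ≠ 0 := by
  refine (Real.sqrt_pos.2 (sum_pos' (fun _ _ => by positivity) ⟨α, hα, ?_⟩)).ne'
  positivity

lemma le_sqrt_prod_rpow_sliceNorm_mul_sqrt {m : ℕ} (hm : m ≠ 0) {b : (ι → ℕ) → ℝ} {α : ι → ℕ}
    (hα : α ∈ piAntidiag univ m) :
    b α ≤ √(∏ j, sliceNorm m b j ^ (α j / m : ℝ)) *
      √(b α ^ 2 * ∑ j, (α j / m : ℝ) / sliceNorm m b j) := by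
  rcases eq_or_ne (b α) 0 with hb | hb
  · simp [hb]
  have hweights : ∑ j, (α j / m : ℝ) = 1 := by
    rw [← sum_div, ← Nat.cast_sum, mem_piAntidiag_univ.1 hα, div_self (Nat.cast_ne_zero.2 hm)]
  have hone := one_le_prod_rpow_mul_sum_div univ (fun j => (α j / m : ℝ)) (sliceNorm m b)
    (fun _ _ => by positivity) hweights (fun j _ => sliceNorm_nonneg m b j)
    fun j _ hj => sliceNorm_ne_zero hm hα hb (by rintro h; simp [h] at hj)
  rw [← Real.sqrt_mul (prod_nonneg fun j _ => Real.rpow_nonneg (sliceNorm_nonneg m b j) _)]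
  refine Real.le_sqrt_of_sq_le ?_
  rw [mul_left_comm]
  exact le_mul_of_one_le_right (sq_nonneg _) hone

lemma sum_rpow_le_sum_sliceNorm_rpow {m : ℕ} (hm : m ≠ 0) {b : (ι → ℕ) → ℝ} (hb : ∀ α, 0 ≤ b α) :
    ∑ α ∈ piAntidiag univ m, b α ^ (2 * m / (m + 1) : ℝ) ≤
      (∑ j, sliceNorm m b j) ^ (2 * m / (m + 1) : ℝ) := by
  have : (0 : ℝ) < m := mod_cast hm.bot_lt
  set S := sliceNorm m b
  have hS (j : ι) : 0 ≤ S j := sliceNorm_nonneg m b j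
  have hsumS : 0 ≤ ∑ j, S j := sum_nonneg fun j _ => hS j
  let f (α : ι → ℕ) : ℝ := √(∏ j, S j ^ (α j / m : ℝ))
  let g (α : ι → ℕ) : ℝ := √(b α ^ 2 * ∑ j, (α j / m : ℝ) / S j)
  have hf : ∑ α ∈ piAntidiag univ m, f α ^ (2 * m : ℝ) ≤ (∑ j, S j) ^ m := by
    simp only [f, sqrt_prod_rpow_div_rpow_two_mul hm hS]
    exact sum_piAntidiag_prod_pow_le_sum_pow hS m
  have hg : ∑ α ∈ piAntidiag univ m, g α ^ (2 : ℝ) = ∑ j, S j := by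
    rw [← sum_sum_div_sliceNorm m b]
    refine sum_congr rfl fun α _ => ?_
    rw [Real.rpow_two, Real.sq_sqrt]
    exact mul_nonneg (sq_nonneg _) (sum_nonneg fun j _ => div_nonneg (by positivity) (hS j))
  have hexp : Real.HolderTriple (2 * m) 2 (2 * m / (m + 1)) :=
    ⟨by field_simp; ring, by positivity, by simp⟩
  calc ∑ α ∈ piAntidiag univ m, b α ^ (2 * m / (m + 1) : ℝ)
      ≤ ∑ α ∈ piAntidiag univ m, (f α * g α) ^ (2 * m / (m + 1) : ℝ) := by
        gcongr with α hα
        · exact hb α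
        · exact le_sqrt_prod_rpow_sliceNorm_mul_sqrt hm hα
    _ ≤ (∑ α ∈ piAntidiag univ m, f α ^ (2 * m : ℝ)) ^ (2 * m / (m + 1) / (2 * m) : ℝ) *
          (∑ α ∈ piAntidiag univ m, g α ^ (2 : ℝ)) ^ (2 * m / (m + 1) / 2 : ℝ) :=
        Real.Lr_rpow_le_Lp_mul_Lq_of_nonneg _ hexp (fun _ _ => Real.sqrt_nonneg _)
          fun _ _ => Real.sqrt_nonneg _
    _ ≤ ((∑ j, S j) ^ m) ^ (2 * m / (m + 1) / (2 * m) : ℝ) *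
          (∑ j, S j) ^ (2 * m / (m + 1) / 2 : ℝ) := by
        rw [hg]
        gcongr
    _ = (∑ j, S j) ^ (2 * m / (m + 1) : ℝ) := by
        rw [← Real.rpow_natCast, ← Real.rpow_mul hsumS,
          ← Real.rpow_add_of_nonneg hsumS (by positivity) (by positivity)]
        congr 1
        field_simp
        norm_num

theorem sum_rpow_rpow_le_sum_sliceNorm {m : ℕ} (hm : m ≠ 0) {b : (ι → ℕ) → ℝ}
    (hb : ∀ α, 0 ≤ b α) :
    (∑ α ∈ piAntidiag univ m, b α ^ (2 * m / (m + 1) : ℝ)) ^ ((m + 1) / (2 * m) : ℝ) ≤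
      ∑ j, sliceNorm m b j := by
  rw [← inv_div (2 * m : ℝ)]
  exact (Real.rpow_inv_le_iff_of_pos (sum_nonneg fun α _ => Real.rpow_nonneg (hb α) _)
    (sum_nonneg fun j _ => sliceNorm_nonneg m b j) (by have := hm.bot_lt; positivity)).2
    (sum_rpow_le_sum_sliceNorm_rpow hm hb)

end Blei

section TorsionCharacter

variable {ι : Type*} {N : ℕ}

/-- The monomial `z ^ α` as a character of the group of `N`-torsion points of the torus. Averages
over this finite group stand in for integrals over the torus. -/
def torsionCharacter [Fintype ι] (N : ℕ) (α : ι → ℕ) : (ι → rootsOfUnity N ℂ) →* ℂˣ where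
  toFun ζ := ∏ i, (ζ i : ℂˣ) ^ α i
  map_one' := by simp
  map_mul' ζ ξ := by simp [mul_pow, prod_mul_distrib]

noncomputable instance torsionFintype [NeZero N] : Fintype (rootsOfUnity N ℂ) :=
  Fintype.ofFinite _

variable [Fintype ι]

lemma coe_torsionCharacter (α : ι → ℕ) (ζ : ι → rootsOfUnity N ℂ) :
    (torsionCharacter N α ζ : ℂ) = ∏ i, ((ζ i : ℂˣ) : ℂ) ^ α i := by
  simp [torsionCharacter]

variable [NeZero N]

lemma conj_torsionCharacter (α : ι → ℕ) (ζ : ι → rootsOfUnity N ℂ) :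
    conj (torsionCharacter N α ζ : ℂ) = ((torsionCharacter N α ζ)⁻¹ : ℂˣ) := by
  refine Complex.conj_rootsOfUnity (n := N) ?_
  exact Subgroup.prod_mem _ fun i _ => Subgroup.pow_mem _ (ζ i).2 _

lemma torsionCharacter_injOn :
    Set.InjOn (torsionCharacter (ι := ι) N) {α | ∀ i, α i < N} := by
  classical
  intro α hα β hβ h
  funext i
  have hω := Complex.isPrimitiveRoot_exp N (NeZero.ne N)
  have heval := congrArg Units.val <| DFunLike.congr_fun h (Pi.mulSingle i hω.toRootsOfUnity)
  simp only [coe_torsionCharacter, Pi.mulSingle_apply, apply_ite] at heval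
  refine hω.pow_inj (hα i) (hβ i) ?_
  simpa [Pi.mulSingle_apply, apply_ite, ite_pow] using heval

lemma expect_torsionCharacter_mul_conj [DecidableEq ι] {α β : ι → ℕ} (hα : ∀ i, α i < N)
    (hβ : ∀ i, β i < N) :
    𝔼 ζ, (torsionCharacter N α ζ : ℂ) * conj (torsionCharacter N β ζ : ℂ) =
      if α = β then 1 else 0 := by
  simp only [conj_torsionCharacter]
  split_ifs with h
  · simp [h]
  · let χ : (ι → rootsOfUnity N ℂ) →* ℂ :=
      (Units.coeHom ℂ).comp (torsionCharacter N α / torsionCharacter N β)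
    have hχ : χ ≠ 1 := by
      intro hχ_one
      refine h (torsionCharacter_injOn hα hβ (div_eq_one.1 ?_))
      exact MonoidHom.ext fun ζ => Units.ext (DFunLike.congr_fun hχ_one ζ)
    simpa [χ, div_eq_mul_inv, Fintype.expect_eq_sum_div_card] using sum_hom_units_eq_zero χ hχ

lemma expect_norm_sum_torsionCharacter_sq [DecidableEq ι] {A : Finset (ι → ℕ)}
    (hA : ∀ α ∈ A, ∀ i, α i < N) (d : (ι → ℕ) → ℂ) :
    𝔼 ζ, ‖∑ α ∈ A, d α * torsionCharacter N α ζ‖ ^ 2 = ∑ α ∈ A, ‖d α‖ ^ 2 := by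
  apply Complex.ofReal_injective
  calc ((𝔼 ζ, ‖∑ α ∈ A, d α * torsionCharacter N α ζ‖ ^ 2 : ℝ) : ℂ)
      = 𝔼 ζ, ∑ α ∈ A, ∑ β ∈ A, d α * conj (d β) *
          ((torsionCharacter N α ζ : ℂ) * conj (torsionCharacter N β ζ : ℂ)) := by
        push_cast
        refine expect_congr rfl fun ζ _ => ?_
        rw [← Complex.mul_conj', map_sum, sum_mul_sum]
        simp only [map_mul, mul_mul_mul_comm]
    _ = ∑ α ∈ A, ∑ β ∈ A, d α * conj (d β) * if α = β then 1 else 0 := by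
        simp_rw [expect_sum_comm, ← mul_expect]
        exact sum_congr rfl fun α hα => sum_congr rfl fun β hβ => by
          rw [expect_torsionCharacter_mul_conj (hA α hα) (hA β hβ)]
    _ = ((∑ α ∈ A, ‖d α‖ ^ 2 : ℝ) : ℂ) := by
        push_cast
        refine sum_congr rfl fun α hα => ?_
        simp [hα, Complex.mul_conj']

end TorsionCharacter

section Product

variable {ι R : Type*} [Fintype ι] [DecidableEq ι]

/-- The coefficients of the product of a `k`-homogeneous polynomial with coefficients `c` and a
homogeneous polynomial with coefficients `d`. -/
def mulCoeff [CommSemiring R] (k : ℕ) (c d : (ι → ℕ) → R) (α : ι → ℕ) : R :=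
  ∑ β ∈ piAntidiag univ k with ∀ i, β i ≤ α i, c β * d (α - β)

lemma sum_mul_prod_pow_mul_sum_mul_prod_pow [CommSemiring R] (k l : ℕ)
    (c d : (ι → ℕ) → R) (z : ι → R) :
    (∑ β ∈ piAntidiag univ k, c β * ∏ i, z i ^ β i) *
        ∑ γ ∈ piAntidiag univ l, d γ * ∏ i, z i ^ γ i =
      ∑ α ∈ piAntidiag univ (k + l), mulCoeff k c d α * ∏ i, z i ^ α i := by
  rw [sum_mul_sum, sum_sum_piAntidiag_eq_sum_piAntidiag_add]
  simp only [mulCoeff, sum_mul]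
  refine sum_congr rfl fun α _ => sum_congr rfl fun β hβ => ?_
  have hβα : ∀ i, β i ≤ α i := (mem_filter.1 hβ).2
  simp only [mul_mul_mul_comm _ (∏ i, z i ^ β i), ← prod_mul_distrib, ← pow_add, Pi.sub_apply,
    add_tsub_cancel_of_le (hβα _)]

lemma sum_norm_mulCoeff_sq_le [NormedField R] (k l : ℕ) (c d : (ι → ℕ) → R) :
    ∑ α ∈ piAntidiag univ (k + l), ‖mulCoeff k c d α‖ ^ 2 ≤
      (k + l).choose k *
        ((∑ β ∈ piAntidiag univ k, ‖c β‖ ^ 2) * ∑ γ ∈ piAntidiag univ l, ‖d γ‖ ^ 2) := by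
  have cauchy_schwarz (α : ι → ℕ) (hα : α ∈ piAntidiag univ (k + l)) :
      ‖mulCoeff k c d α‖ ^ 2 ≤ (k + l).choose k *
        ∑ β ∈ piAntidiag univ k with ∀ i, β i ≤ α i, ‖c β‖ ^ 2 * ‖d (α - β)‖ ^ 2 := by
    simp_rw [← mul_pow, ← norm_mul]
    calc ‖mulCoeff k c d α‖ ^ 2
        ≤ (∑ β ∈ piAntidiag univ k with ∀ i, β i ≤ α i, ‖c β * d (α - β)‖) ^ 2 := by
          gcongr
          exact norm_sum_le _ _
      _ ≤ #{β ∈ piAntidiag univ k | ∀ i, β i ≤ α i} *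
            ∑ β ∈ piAntidiag univ k with ∀ i, β i ≤ α i, ‖c β * d (α - β)‖ ^ 2 :=
          sq_sum_le_card_mul_sum_sq
      _ ≤ (k + l).choose k *
            ∑ β ∈ piAntidiag univ k with ∀ i, β i ≤ α i, ‖c β * d (α - β)‖ ^ 2 := by
          gcongr
          exact mem_piAntidiag_univ.1 hα ▸ card_filter_le_piAntidiag_le_choose α k
  rw [sum_mul_sum, sum_sum_piAntidiag_eq_sum_piAntidiag_add, mul_sum]
  exact sum_le_sum cauchy_schwarz

end Product

section Hypercontractivity

variable {n : ℕ}

lemma mhEval_eq_sum_piAntidiag (m : ℕ) (a : (Fin n → ℕ) → ℂ) (z : Fin n → ℂ) :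
    mhEval n m a z = ∑ α ∈ piAntidiag univ m, a α * ∏ i, z i ^ α i := by
  rw [mhEval, piAntidiag_univ_fin_eq_antidiagonalTuple]

lemma mhEval_mul_mhEval (k l : ℕ) (c d : (Fin n → ℕ) → ℂ) (z : Fin n → ℂ) :
    mhEval n k c z * mhEval n l d z = mhEval n (k + l) (mulCoeff k c d) z := by
  simp only [mhEval_eq_sum_piAntidiag, sum_mul_prod_pow_mul_sum_mul_prod_pow]

lemma expect_norm_mhEval_sq {m N : ℕ} [NeZero N] (hN : m < N) (a : (Fin n → ℕ) → ℂ) :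
    𝔼 ζ : Fin n → rootsOfUnity N ℂ, ‖mhEval n m a fun i => (ζ i : ℂˣ)‖ ^ 2 =
      ∑ α ∈ piAntidiag univ m, ‖a α‖ ^ 2 := by
  simp only [mhEval_eq_sum_piAntidiag, ← coe_torsionCharacter]
  refine expect_norm_sum_torsionCharacter_sq (fun α hα i => ?_) a
  rw [mem_piAntidiag_univ] at hα
  exact (single_le_sum_of_canonicallyOrdered (mem_univ i)).trans_lt (hα ▸ hN)

lemma expect_norm_mhEval_pow_four_le {k N : ℕ} [NeZero N] (hN : 2 * k < N) (c : (Fin n → ℕ) → ℂ) :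
    𝔼 ζ : Fin n → rootsOfUnity N ℂ, ‖mhEval n k c fun i => (ζ i : ℂˣ)‖ ^ 4 ≤
      k.centralBinom * (∑ β ∈ piAntidiag univ k, ‖c β‖ ^ 2) ^ 2 := by
  calc 𝔼 ζ : Fin n → rootsOfUnity N ℂ, ‖mhEval n k c fun i => (ζ i : ℂˣ)‖ ^ 4
      = 𝔼 ζ : Fin n → rootsOfUnity N ℂ,
          ‖mhEval n (2 * k) (mulCoeff k c c) fun i => (ζ i : ℂˣ)‖ ^ 2 := by
        refine expect_congr rfl fun ζ _ => ?_
        rw [two_mul, ← mhEval_mul_mhEval, norm_mul]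
        ring
    _ = ∑ α ∈ piAntidiag univ (2 * k), ‖mulCoeff k c c α‖ ^ 2 := expect_norm_mhEval_sq hN _
    _ ≤ k.centralBinom * (∑ β ∈ piAntidiag univ k, ‖c β‖ ^ 2) ^ 2 := by
        rw [sq, Nat.centralBinom_eq_two_mul_choose, two_mul]
        exact sum_norm_mulCoeff_sq_le k k c c

lemma expect_sq_pow_three_le {κ : Type*} (s : Finset κ) {F : κ → ℝ} (hF : ∀ i, 0 ≤ F i) :
    (𝔼 i ∈ s, F i ^ 2) ^ 3 ≤ (𝔼 i ∈ s, F i) ^ 2 * 𝔼 i ∈ s, F i ^ 4 := by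
  have hsq_sq : (𝔼 i ∈ s, F i ^ 2) ^ 2 ≤ (𝔼 i ∈ s, F i) * 𝔼 i ∈ s, F i ^ 3 := by
    have hsqrt (i : κ) : √(F i) ^ 2 = F i := Real.sq_sqrt (hF i)
    calc (𝔼 i ∈ s, F i ^ 2) ^ 2 = (𝔼 i ∈ s, √(F i) * √(F i) ^ 3) ^ 2 := by
          simp only [← pow_succ', pow_mul √_ 2 2, hsqrt]
      _ ≤ (𝔼 i ∈ s, √(F i) ^ 2) * 𝔼 i ∈ s, (√(F i) ^ 3) ^ 2 := expect_mul_sq_le_sq_mul_sq _ _ _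
      _ = (𝔼 i ∈ s, F i) * 𝔼 i ∈ s, F i ^ 3 := by simp only [pow_right_comm _ 3 2, hsqrt]
  have hcube_sq : (𝔼 i ∈ s, F i ^ 3) ^ 2 ≤ (𝔼 i ∈ s, F i ^ 2) * 𝔼 i ∈ s, F i ^ 4 := by
    calc (𝔼 i ∈ s, F i ^ 3) ^ 2 = (𝔼 i ∈ s, F i * F i ^ 2) ^ 2 := by simp only [pow_succ' _ 2]
      _ ≤ (𝔼 i ∈ s, F i ^ 2) * 𝔼 i ∈ s, (F i ^ 2) ^ 2 := expect_mul_sq_le_sq_mul_sq _ _ _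
      _ = (𝔼 i ∈ s, F i ^ 2) * 𝔼 i ∈ s, F i ^ 4 := by simp only [← pow_mul]
  rcases (expect_nonneg fun i _ => sq_nonneg (F i) : 0 ≤ 𝔼 i ∈ s, F i ^ 2).eq_or_lt with h | h
  · rw [← h, zero_pow three_ne_zero]
    exact mul_nonneg (sq_nonneg _) (expect_nonneg fun i _ => pow_nonneg (hF i) 4)
  refine le_of_mul_le_mul_left ?_ h
  calc (𝔼 i ∈ s, F i ^ 2) * (𝔼 i ∈ s, F i ^ 2) ^ 3 = ((𝔼 i ∈ s, F i ^ 2) ^ 2) ^ 2 := by ring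
    _ ≤ ((𝔼 i ∈ s, F i) * 𝔼 i ∈ s, F i ^ 3) ^ 2 := by gcongr
    _ = (𝔼 i ∈ s, F i) ^ 2 * (𝔼 i ∈ s, F i ^ 3) ^ 2 := mul_pow _ _ _
    _ ≤ (𝔼 i ∈ s, F i) ^ 2 * ((𝔼 i ∈ s, F i ^ 2) * 𝔼 i ∈ s, F i ^ 4) := by gcongr
    _ = (𝔼 i ∈ s, F i ^ 2) * ((𝔼 i ∈ s, F i) ^ 2 * 𝔼 i ∈ s, F i ^ 4) := by ring

lemma sqrt_sum_norm_sq_le_expect_norm_mhEval {k N : ℕ} [NeZero N] (hN : 2 * k < N)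
    (c : (Fin n → ℕ) → ℂ) :
    √(∑ β ∈ piAntidiag univ k, ‖c β‖ ^ 2) ≤ √k.centralBinom *
      𝔼 ζ : Fin n → rootsOfUnity N ℂ, ‖mhEval n k c fun i => (ζ i : ℂˣ)‖ := by
  set A := ∑ β ∈ piAntidiag univ k, ‖c β‖ ^ 2
  have hA : 0 ≤ A := sum_nonneg fun β _ => sq_nonneg ‖c β‖
  let F (ζ : Fin n → rootsOfUnity N ℂ) : ℝ := ‖mhEval n k c fun i => (ζ i : ℂˣ)‖
  have hF (ζ) : 0 ≤ F ζ := norm_nonneg _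
  rcases hA.eq_or_lt with h | h
  · rw [← h, Real.sqrt_zero]
    exact mul_nonneg (Real.sqrt_nonneg _) (expect_nonneg fun ζ _ => hF ζ)
  have hcube : A ^ 3 ≤ (𝔼 ζ, F ζ) ^ 2 * (k.centralBinom * A ^ 2) :=
    calc A ^ 3 = (𝔼 ζ, F ζ ^ 2) ^ 3 := by rw [expect_norm_mhEval_sq (by lia)]
      _ ≤ (𝔼 ζ, F ζ) ^ 2 * 𝔼 ζ, F ζ ^ 4 := expect_sq_pow_three_le univ hF
      _ ≤ (𝔼 ζ, F ζ) ^ 2 * (k.centralBinom * A ^ 2) := by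
          gcongr
          exact expect_norm_mhEval_pow_four_le hN c
  have hsq : A ≤ k.centralBinom * (𝔼 ζ, F ζ) ^ 2 :=
    le_of_mul_le_mul_left (by linarith) (pow_pos h 2)
  calc √A ≤ √(k.centralBinom * (𝔼 ζ, F ζ) ^ 2) := Real.sqrt_le_sqrt hsq
    _ = √k.centralBinom * 𝔼 ζ, F ζ := by
        rw [Real.sqrt_mul (Nat.cast_nonneg _), Real.sqrt_sq (expect_nonneg fun ζ _ => hF ζ)]

end Hypercontractivity

section Polydisc

variable {n : ℕ}

lemma polydiscSup_nonneg (m : ℕ) (a : (Fin n → ℕ) → ℂ) : 0 ≤ polydiscSup n m a := by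
  refine Real.sSup_nonneg ?_
  rintro _ ⟨z, _, rfl⟩
  exact norm_nonneg _

lemma norm_mhEval_le_sum_norm (m : ℕ) (a : (Fin n → ℕ) → ℂ) {z : Fin n → ℂ} (hz : ‖z‖ ≤ 1) :
    ‖mhEval n m a z‖ ≤ ∑ α ∈ piAntidiag univ m, ‖a α‖ := by
  rw [mhEval_eq_sum_piAntidiag]
  refine norm_sum_le_of_le _ fun α _ => ?_
  rw [norm_mul, norm_prod]
  refine mul_le_of_le_one_right (norm_nonneg _) ?_
  refine prod_le_one (fun _ _ => norm_nonneg _) fun i _ => ?_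
  rw [norm_pow]
  exact pow_le_one₀ (norm_nonneg _) ((norm_le_pi_norm z i).trans hz)

lemma continuous_mhEval (m : ℕ) (a : (Fin n → ℕ) → ℂ) : Continuous (mhEval n m a) := by
  unfold mhEval
  fun_prop

lemma norm_mhEval_le_polydiscSup (m : ℕ) (a : (Fin n → ℕ) → ℂ) {z : Fin n → ℂ} (hz : ‖z‖ ≤ 1) :
    ‖mhEval n m a z‖ ≤ polydiscSup n m a := by
  have hopen (u : Fin n → ℂ) (hu : ‖u‖ < 1) : ‖mhEval n m a u‖ ≤ polydiscSup n m a := by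
    refine le_csSup ⟨∑ α ∈ piAntidiag univ m, ‖a α‖, ?_⟩ ⟨u, (pi_norm_lt_iff one_pos).1 hu, rfl⟩
    rintro _ ⟨v, hv, rfl⟩
    exact norm_mhEval_le_sum_norm m a ((pi_norm_lt_iff one_pos).2 hv).le
  have hclosed : IsClosed {u | ‖mhEval n m a u‖ ≤ polydiscSup n m a} :=
    isClosed_le (continuous_mhEval m a).norm continuous_const
  have hsub : Metric.ball 0 1 ⊆ {u | ‖mhEval n m a u‖ ≤ polydiscSup n m a} :=
    fun u hu => hopen u (mem_ball_zero_iff.1 hu)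
  have hclosure := closure_minimal hsub hclosed
  rw [closure_ball _ one_ne_zero] at hclosure
  exact hclosure (mem_closedBall_zero_iff.2 hz)

lemma mhEval_smul (m : ℕ) (a : (Fin n → ℕ) → ℂ) (s : ℂ) (z : Fin n → ℂ) :
    mhEval n m a (s • z) = s ^ m * mhEval n m a z := by
  simp only [mhEval_eq_sum_piAntidiag, mul_sum]
  refine sum_congr rfl fun α hα => ?_
  rw [mem_piAntidiag_univ] at hα
  simp only [Pi.smul_apply, smul_eq_mul, mul_pow, prod_mul_distrib, prod_pow_eq_pow_sum, hα]
  ring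

end Polydisc

section Gradient

variable {n : ℕ}

/-- The coefficients of the partial derivative `∂P/∂z_j` of the homogeneous polynomial `P` with
coefficients `a`. -/
def partialCoeff {ι R : Type*} [DecidableEq ι] [Semiring R] (a : (ι → ℕ) → R) (j : ι)
    (β : ι → ℕ) : R :=
  (β j + 1) * a (β + Pi.single j 1)

lemma prod_erase_pow_add_single {ι M : Type*} [Fintype ι] [DecidableEq ι] [CommMonoid M] (z : ι → M)
    (β : ι → ℕ) (j : ι) : ∏ i ∈ univ.erase j, z i ^ (β + Pi.single j 1 : ι → ℕ) i =
      ∏ i ∈ univ.erase j, z i ^ β i :=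
  prod_congr rfl fun i hi => by simp [ne_of_mem_erase hi]

lemma hasDerivAt_mhEval_add_smul (k : ℕ) (a : (Fin n → ℕ) → ℂ) (z w : Fin n → ℂ) :
    HasDerivAt (fun t : ℂ => mhEval n (k + 1) a (z + t • w))
      (∑ j, w j * mhEval n k (partialCoeff a j) z) 0 := by
  have hcoord (i : Fin n) (e : ℕ) :
      HasDerivAt (fun t : ℂ => (z + t • w) i ^ e) (e * z i ^ (e - 1) * w i) 0 := by
    have h : HasDerivAt (fun t : ℂ => (z + t • w) i) (w i) 0 := by
      simpa using ((hasDerivAt_id (0 : ℂ)).mul_const (w i)).const_add (z i)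
    simpa using h.fun_pow e
  have hderiv : HasDerivAt (fun t : ℂ => mhEval n (k + 1) a (z + t • w))
      (∑ α ∈ piAntidiag univ (k + 1), a α *
        ∑ j, (∏ i ∈ univ.erase j, z i ^ α i) * (α j * z j ^ (α j - 1) * w j)) 0 := by
    simp only [mhEval_eq_sum_piAntidiag]
    refine .fun_sum fun α _ => .const_mul _ ?_
    simpa using HasDerivAt.fun_finsetProd (u := univ) fun i _ => hcoord i (α i)
  convert hderiv using 1
  simp_rw [mul_sum]
  rw [sum_comm]
  refine sum_congr rfl fun j _ => ?_
  rw [sum_piAntidiag_succ_eq_sum_add_single k j _ fun α h => by simp [h],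
    mhEval_eq_sum_piAntidiag, mul_sum]
  refine sum_congr rfl fun β _ => ?_
  rw [partialCoeff, ← mul_prod_erase univ _ (mem_univ j), prod_erase_pow_add_single]
  simp only [Pi.add_apply, Pi.single_eq_same, Nat.add_sub_cancel, Nat.cast_add, Nat.cast_one]
  ring

lemma norm_sum_mul_mhEval_partialCoeff_le (k : ℕ) (a : (Fin n → ℕ) → ℂ) {z w : Fin n → ℂ} {r : ℝ}
    (hr : 0 < r) (hzr : ‖z‖ + r ≤ 1) (hw : ‖w‖ ≤ 1) :
    ‖∑ j, w j * mhEval n k (partialCoeff a j) z‖ ≤ polydiscSup n (k + 1) a / r := by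
  have hdiff : Differentiable ℂ fun t : ℂ => mhEval n (k + 1) a (z + t • w) := by
    unfold mhEval
    fun_prop
  rw [← (hasDerivAt_mhEval_add_smul k a z w).deriv]
  refine Complex.norm_deriv_le_of_forall_mem_sphere_norm_le hr hdiff.diffContOnCl fun t ht => ?_
  rw [mem_sphere_zero_iff_norm] at ht
  refine norm_mhEval_le_polydiscSup _ _ ?_
  calc ‖z + t • w‖ ≤ ‖z‖ + ‖t • w‖ := norm_add_le _ _
    _ = ‖z‖ + r * ‖w‖ := by rw [norm_smul, ht]
    _ ≤ ‖z‖ + r := by gcongr; exact mul_le_of_le_one_right hr.le hw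
    _ ≤ 1 := hzr

lemma sum_norm_le_of_forall_norm_sum_mul_le {ι 𝕜 : Type*} [Fintype ι] [RCLike 𝕜] {v : ι → 𝕜}
    {C : ℝ} (h : ∀ w : ι → 𝕜, ‖w‖ ≤ 1 → ‖∑ j, w j * v j‖ ≤ C) : ∑ j, ‖v j‖ ≤ C := by
  choose w hw_norm hw using fun j => RCLike.exists_norm_eq_mul_self (v j)
  calc ∑ j, ‖v j‖ = ‖∑ j, w j * v j‖ := by
        simp only [← hw, ← RCLike.ofReal_sum]
        exact (RCLike.norm_of_nonneg (sum_nonneg fun j _ => norm_nonneg _)).symm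
    _ ≤ C := h w ((pi_norm_le_iff_of_nonneg zero_le_one).2 fun j => (hw_norm j).le)

lemma sum_norm_mhEval_partialCoeff_le (k : ℕ) (a : (Fin n → ℕ) → ℂ) {z : Fin n → ℂ}
    (hz : ‖z‖ ≤ 1) :
    ∑ j, ‖mhEval n k (partialCoeff a j) z‖ ≤
      (k + 1) ^ (k + 1) / k ^ k * polydiscSup n (k + 1) a := by
  -- Shrinking `z` by `s` costs `s ^ k` and leaves room for discs of radius `1 - s`; this choice of
  -- `s` maximizes `s ^ k * (1 - s)`.
  let s : ℝ := k / (k + 1)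
  have hs : 0 ≤ s := by positivity
  have hzs : ‖(s : ℂ) • z‖ + 1 / (k + 1) ≤ 1 := by
    calc ‖(s : ℂ) • z‖ + 1 / (k + 1) ≤ s + 1 / (k + 1) := by
          gcongr
          rw [norm_smul, Complex.norm_of_nonneg hs]
          exact mul_le_of_le_one_right hs hz
      _ = 1 := by simp only [s]; field_simp
  have hcauchy : s ^ k * ∑ j, ‖mhEval n k (partialCoeff a j) z‖ ≤
      polydiscSup n (k + 1) a / (1 / (k + 1)) := by
    simpa only [mhEval_smul, norm_mul, norm_pow, Complex.norm_of_nonneg hs, ← mul_sum] using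
      sum_norm_le_of_forall_norm_sum_mul_le fun w hw =>
        norm_sum_mul_mhEval_partialCoeff_le k a (by positivity) hzs hw
  have hkk : (0 : ℝ) < k ^ k := mod_cast Nat.pow_self_pos
  calc ∑ j, ‖mhEval n k (partialCoeff a j) z‖
      = (k + 1) ^ k / k ^ k * (s ^ k * ∑ j, ‖mhEval n k (partialCoeff a j) z‖) := by
        simp only [s, div_pow]
        field_simp
    _ ≤ (k + 1) ^ k / k ^ k * (polydiscSup n (k + 1) a / (1 / (k + 1))) := by gcongr
    _ = (k + 1) ^ (k + 1) / k ^ k * polydiscSup n (k + 1) a := by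
        rw [div_div_eq_mul_div, div_one]
        ring

end Gradient

section Constants

lemma sqrt_centralBinom_mul_factorial_le (k : ℕ) :
    √k.centralBinom * (k.factorial : ℝ) ≤ √2 ^ k * k ^ k := by
  have hfactorial : k.centralBinom * k.factorial ^ 2 = (2 * k).factorial := by
    rw [Nat.centralBinom_eq_two_mul_choose, two_mul, ← Nat.add_choose_mul_factorial_mul_factorial]
    ring
  have hnat : k.centralBinom * k.factorial ^ 2 ≤ 2 ^ k * (k ^ k) ^ 2 :=
    calc k.centralBinom * k.factorial ^ 2 = (2 * k).factorial := hfactorial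
      _ ≤ (2 * k) ^ k * k.factorial := Nat.factorial_two_mul_le k
      _ ≤ (2 * k) ^ k * k ^ k := by gcongr; exact Nat.factorial_le_pow k
      _ = 2 ^ k * (k ^ k) ^ 2 := by ring
  refine le_of_sq_le_sq ?_ (by positivity)
  rw [mul_pow, mul_pow, pow_right_comm √2, Real.sq_sqrt (Nat.cast_nonneg _),
    Real.sq_sqrt zero_le_two]
  exact_mod_cast hnat

lemma sqrt_centralBinom_mul_div_sqrt_le (k : ℕ) :
    √k.centralBinom * ((k + 1) ^ (k + 1) / k ^ k) / √(k + 1 : ℕ) ≤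
      √2 ^ k * √(k + 1 : ℕ) * ((k + 1 : ℕ) ^ (k + 1) / (k + 1).factorial : ℝ) := by
  have hkk : (0 : ℝ) < k ^ k := mod_cast Nat.pow_self_pos
  have hsqrt : √(k + 1 : ℕ) * √(k + 1 : ℕ) = k + 1 := by
    rw [Real.mul_self_sqrt (Nat.cast_nonneg _), Nat.cast_succ]
  calc √k.centralBinom * ((k + 1) ^ (k + 1) / k ^ k) / √(k + 1 : ℕ)
      = √k.centralBinom / k ^ k * ((k + 1) ^ (k + 1) / √(k + 1 : ℕ)) := by ring
    _ ≤ √2 ^ k / k.factorial * ((k + 1) ^ (k + 1) / √(k + 1 : ℕ)) := by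
        gcongr ?_ * _
        rw [div_le_div_iff₀ hkk (by positivity)]
        exact sqrt_centralBinom_mul_factorial_le k
    _ = √2 ^ k * √(k + 1 : ℕ) * ((k + 1 : ℕ) ^ (k + 1) / (k + 1).factorial : ℝ) := by
        rw [Nat.factorial_succ]
        push_cast at hsqrt ⊢
        field_simp
        linear_combination -hsqrt

end Constants

section BohnenblustHille

variable {n : ℕ}

lemma sliceNorm_norm_le (k : ℕ) (a : (Fin n → ℕ) → ℂ) (j : Fin n) :
    sliceNorm (k + 1) (fun α => ‖a α‖) j ≤
      √(∑ β ∈ piAntidiag univ k, ‖partialCoeff a j β‖ ^ 2) / √(k + 1 : ℕ) := by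
  rw [sliceNorm, ← Real.sqrt_div' _ (Nat.cast_nonneg _), sum_div,
    sum_piAntidiag_succ_eq_sum_add_single k j _ fun α h => by simp [h]]
  gcongr with β
  have hnorm : ‖partialCoeff a j β‖ = (β j + 1 : ℕ) * ‖a (β + Pi.single j 1)‖ := by
    rw [partialCoeff, norm_mul, ← Nat.cast_succ, Complex.norm_natCast]
  rw [hnorm, mul_pow, div_mul_eq_mul_div, Pi.add_apply, Pi.single_eq_same]
  gcongr
  exact_mod_cast Nat.le_self_pow two_ne_zero _

lemma sum_sqrt_partialCoeff_le (k : ℕ) (a : (Fin n → ℕ) → ℂ) :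
    ∑ j, √(∑ β ∈ piAntidiag univ k, ‖partialCoeff a j β‖ ^ 2) ≤
      √k.centralBinom * ((k + 1) ^ (k + 1) / k ^ k * polydiscSup n (k + 1) a) := by
  let torsionPoint (ζ : Fin n → rootsOfUnity (2 * k + 1) ℂ) (i : Fin n) : ℂ := (ζ i : ℂˣ)
  have hnorm (ζ) : ‖torsionPoint ζ‖ ≤ 1 :=
    (pi_norm_le_iff_of_nonneg zero_le_one).2 fun i =>
      (Complex.norm_eq_one_of_mem_rootsOfUnity (ζ i).2).le
  calc ∑ j, √(∑ β ∈ piAntidiag univ k, ‖partialCoeff a j β‖ ^ 2)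
      ≤ ∑ j, √k.centralBinom * 𝔼 ζ, ‖mhEval n k (partialCoeff a j) (torsionPoint ζ)‖ :=
        sum_le_sum fun j _ => sqrt_sum_norm_sq_le_expect_norm_mhEval (Nat.lt_succ_self _) _
    _ = √k.centralBinom * 𝔼 ζ, ∑ j, ‖mhEval n k (partialCoeff a j) (torsionPoint ζ)‖ := by
        rw [← mul_sum, expect_sum_comm]
    _ ≤ √k.centralBinom * ((k + 1) ^ (k + 1) / k ^ k * polydiscSup n (k + 1) a) := by
        gcongr
        exact expect_le univ_nonempty fun ζ _ => sum_norm_mhEval_partialCoeff_le k a (hnorm ζ)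

end BohnenblustHille

/-- Bohnenblust–Hille inequality for `m`-homogeneous polynomials with the explicit
constant `√2^(m-1) · √m · m^m/m!` obtained in the paper's proof. -/
theorem bohnenblust_hille_explicit_constant (m n : ℕ) (hm : 0 < m) (hn : 0 < n)
    (a : (Fin n → ℕ) → ℂ) :
    (∑ α ∈ Finset.Nat.antidiagonalTuple n m,
        ‖a α‖ ^ ((2 * (m : ℝ)) / ((m : ℝ) + 1))) ^ (((m : ℝ) + 1) / (2 * (m : ℝ)))
      ≤ Real.sqrt 2 ^ (m - 1) * Real.sqrt m * ((m : ℝ) ^ m / (Nat.factorial m : ℝ)) *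
          polydiscSup n m a := by
  obtain ⟨k, rfl⟩ := Nat.exists_eq_succ_of_ne_zero hm.ne'
  rw [← piAntidiag_univ_fin_eq_antidiagonalTuple, Nat.succ_sub_one]
  calc _ ≤ ∑ j, sliceNorm (k + 1) (fun α => ‖a α‖) j :=
        sum_rpow_rpow_le_sum_sliceNorm hm.ne' fun α => norm_nonneg (a α)
    _ ≤ ∑ j, √(∑ β ∈ piAntidiag univ k, ‖partialCoeff a j β‖ ^ 2) / √(k + 1 : ℕ) :=
        sum_le_sum fun j _ => sliceNorm_norm_le k a j
    _ ≤ √k.centralBinom * ((k + 1) ^ (k + 1) / k ^ k * polydiscSup n (k + 1) a) /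
          √(k + 1 : ℕ) := by
        rw [← sum_div]
        gcongr
        exact sum_sqrt_partialCoeff_le k a
    _ = √k.centralBinom * ((k + 1) ^ (k + 1) / k ^ k) / √(k + 1 : ℕ) *
          polydiscSup n (k + 1) a := by ring
    _ ≤ _ := mul_le_mul_of_nonneg_right (sqrt_centralBinom_mul_div_sqrt_le k)
        (polydiscSup_nonneg _ a)
end

section
/- There is an absolute constant C ≥ 1 such that for every 1 ≤ p ≤ ∞ and all positive integers m, n, the unconditional basis constant of the monomials in 𝒫(^m ℓ_p^n) satisfies χ_mon(𝒫(^m ℓ_p^n)) ≤ C^m · (1 + n/m)^{(m-1)(1 - 1/min(p,2))}. -/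
open Finset
open scoped ENNReal

/-- The `ℓ_p`-norm of a vector in `ℂ^n`, for `1 ≤ p ≤ ∞`. -/
noncomputable def pNorm (p : ℝ≥0∞) {n : ℕ} (z : Fin n → ℂ) : ℝ :=
  if p = ∞ then ⨆ i, ‖z i‖ else (∑ i, ‖z i‖ ^ p.toReal) ^ (1 / p.toReal)

/-!
Let `|P| = ∑ |a_α| z^α` be the majorant of an `m`-homogeneous polynomial `P = ∑ a_α z^α` whose
values on the unit ball have modulus at most `S`; the task is to bound `|P|(|z|)` for `z` in the
ball. By Euler's identity it is at most `∑ |z_k| (∂_k|P|)(|z|)`, and Cauchy's estimate on complex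
lines bounds `D_u P` by `2^m S` on the ball for every `u` in the ball. Passing to
derivatives lowers the degree to `d = m - 1`, which is where the exponent `m - 1` comes from.

If `p ≤ 2`, Cauchy's coefficient estimate on the `ℓ_p` ball bounds the coefficient of `z^β` in
`D_u P` by `2^m S e^d (d! / β!)^(1/p)`, and by Hölder's inequality and the multinomial theorem
`∑ (d! / β!)^(1/p) |z^β|` is at most `M^(1 - 1/p)`, with `M` the number of monomials of degree `d`.

If `p ≥ 2`, the Cauchy–Schwarz inequality and Parseval's identity bound the majorant of `∂_k P` by
`√M` times the `L²` norm of `∂_k P` on the polytorus through `z`. That norm is at most `2^d` times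
the `L¹` norm, because `‖∂_k P‖₄ ≤ √2^d ‖∂_k P‖₂`. The weighted sum over `k` of the `L¹` norms is
an average over the polytorus of `D_u P` for directions `u` that vary with the point.

Finally `M ≤ e^m (1 + n/m)^d`.
-/

open MeasureTheory MvPolynomial

theorem integral_sq_pow_three_le {Ω : Type*} [MeasurableSpace Ω] {μ : Measure Ω} {f : Ω → ℝ}
    (hf : ∀ x, 0 ≤ f x) (hf₁ : Integrable f μ) (hf₄ : Integrable (fun x => f x ^ 4) μ) :
    (∫ x, f x ^ 2 ∂μ) ^ 3 ≤ (∫ x, f x ∂μ) ^ 2 * ∫ x, f x ^ 4 ∂μ := by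
  have hpow (r s : ℝ) (k : ℕ) (hk : r * s = k) (x : Ω) : (f x ^ r) ^ s = f x ^ k := by
    rw [← Real.rpow_mul (hf x), hk, Real.rpow_natCast]
  have hmem (r s : ℝ) (k : ℕ) (hs : 0 < s) (hk : r * s = k)
      (hint : Integrable (fun x => f x ^ k) μ) :
      MemLp (fun x => f x ^ r) (ENNReal.ofReal s) μ := by
    refine (integrable_norm_rpow_iff (hf₁.aemeasurable.pow_const r).aestronglyMeasurable
      (by simpa using hs) ENNReal.ofReal_ne_top).mp ?_
    simpa only [Real.norm_of_nonneg (Real.rpow_nonneg (hf _) r), ENNReal.toReal_ofReal hs.le,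
      hpow r s k hk] using hint
  have hHolder : ∫ x, f x ^ 2 ∂μ
      ≤ (∫ x, f x ∂μ) ^ (2 / 3 : ℝ) * (∫ x, f x ^ 4 ∂μ) ^ (1 / 3 : ℝ) := by
    have h := integral_mul_le_Lp_mul_Lq_of_nonneg (p := 3 / 2) (q := 3) (μ := μ)
      (Real.holderConjugate_iff.mpr (by norm_num))
      (.of_forall fun x => Real.rpow_nonneg (hf x) (2 / 3))
      (.of_forall fun x => Real.rpow_nonneg (hf x) (4 / 3))
      (hmem (2 / 3) (3 / 2) 1 (by norm_num) (by norm_num) (by simpa using hf₁))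
      (hmem (4 / 3) 3 4 (by norm_num) (by norm_num) hf₄)
    simp only [← Real.rpow_add_of_nonneg (hf _) (show (0 : ℝ) ≤ 2 / 3 by norm_num)
      (show (0 : ℝ) ≤ 4 / 3 by norm_num), hpow (2 / 3) (3 / 2) 1 (by norm_num),
      hpow (4 / 3) 3 4 (by norm_num), pow_one] at h
    norm_num at h ⊢
    exact h
  have hA : 0 ≤ ∫ x, f x ∂μ := integral_nonneg hf
  have hF : 0 ≤ ∫ x, f x ^ 4 ∂μ := integral_nonneg fun x => pow_nonneg (hf x) 4
  calc (∫ x, f x ^ 2 ∂μ) ^ 3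
      ≤ ((∫ x, f x ∂μ) ^ (2 / 3 : ℝ) * (∫ x, f x ^ 4 ∂μ) ^ (1 / 3 : ℝ)) ^ 3 := by
        gcongr
    _ = (∫ x, f x ∂μ) ^ 2 * ∫ x, f x ^ 4 ∂μ := by
        rw [mul_pow, ← Real.rpow_mul_natCast hA, ← Real.rpow_mul_natCast hF]
        norm_num

section CauchyProduct

variable {ι : Type*}

theorem card_antidiagonal_le_two_pow_degree [DecidableEq ι] (γ : ι →₀ ℕ) :
    #(antidiagonal γ) ≤ 2 ^ γ.degree := by
  calc #(antidiagonal γ) ≤ #(Iic γ) := by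
        refine card_le_card_of_injOn Prod.fst (fun x hx => ?_) fun x hx y hy hxy => ?_
        · rw [mem_coe, HasAntidiagonal.mem_antidiagonal] at hx
          exact mem_coe.mpr (mem_Iic.mpr (hx ▸ le_self_add))
        · rw [mem_coe, HasAntidiagonal.mem_antidiagonal] at hx hy
          exact Prod.ext hxy (add_left_cancel (hx.trans (hxy ▸ hy.symm)))
    _ = ∏ i ∈ γ.support, (γ i + 1) := by simp [Finsupp.card_Iic]
    _ ≤ ∏ i ∈ γ.support, 2 ^ γ i := prod_le_prod' fun i _ => Nat.lt_two_pow_self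
    _ = 2 ^ γ.degree := prod_pow_eq_pow_sum ..

theorem sq_norm_coeff_mul_le [DecidableEq ι] {R : Type*} [SeminormedCommRing R]
    (P Q : MvPolynomial ι R) (γ : ι →₀ ℕ) :
    ‖coeff γ (P * Q)‖ ^ 2
      ≤ 2 ^ γ.degree * ∑ x ∈ antidiagonal γ, ‖coeff x.1 P‖ ^ 2 * ‖coeff x.2 Q‖ ^ 2 := by
  calc ‖coeff γ (P * Q)‖ ^ 2
      ≤ (∑ x ∈ antidiagonal γ, ‖coeff x.1 P‖ * ‖coeff x.2 Q‖) ^ 2 := by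
        rw [coeff_mul]
        gcongr
        exact norm_sum_le_of_le _ fun x _ => norm_mul_le _ _
    _ ≤ #(antidiagonal γ) * ∑ x ∈ antidiagonal γ, (‖coeff x.1 P‖ * ‖coeff x.2 Q‖) ^ 2 :=
        sq_sum_le_card_mul_sum_sq
    _ ≤ 2 ^ γ.degree * ∑ x ∈ antidiagonal γ, ‖coeff x.1 P‖ ^ 2 * ‖coeff x.2 Q‖ ^ 2 := by
        simp only [mul_pow]
        gcongr
        exact_mod_cast card_antidiagonal_le_two_pow_degree γ

theorem sum_sum_antidiagonal_le_sq_sum {M R : Type*} [AddMonoid M] [HasAntidiagonal M]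
    [CommSemiring R] [PartialOrder R] [IsOrderedRing R] {s : Finset M} {c : M → R}
    (hc : ∀ α, 0 ≤ c α) (hs : ∀ α, α ∉ s → c α = 0) (t : Finset M) :
    ∑ γ ∈ t, ∑ x ∈ antidiagonal γ, c x.1 * c x.2 ≤ (∑ α ∈ s, c α) ^ 2 := by
  have := Classical.decEq M
  have hfiber (γ : M) : ∑ x ∈ antidiagonal γ, c x.1 * c x.2
      = ∑ x ∈ s ×ˢ s with x.1 + x.2 = γ, c x.1 * c x.2 := by
    refine (sum_subset (fun x hx => by simpa using (mem_filter.mp hx).2) fun x hx hx' => ?_).symm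
    have : x.1 ∉ s ∨ x.2 ∉ s := by
      by_contra! h
      exact hx' (by simpa [h] using hx)
    obtain h | h := this <;> simp [hs _ h]
  simp_rw [hfiber, sum_fiberwise_eq_sum_filter, pow_two (∑ α ∈ s, c α), sum_mul_sum,
    ← sum_product']
  exact sum_le_sum_of_subset_of_nonneg (filter_subset ..) fun _ _ _ => mul_nonneg (hc _) (hc _)

end CauchyProduct

-- Mathlib declares the normalised Haar measure on the circle only locally.
attribute [local instance] instMeasureSpaceUnitAddCircle
  instIsProbabilityMeasureUnitAddCircleVolume

section Torus

variable {ι : Type*}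

/-- The point of the polytorus through `w` obtained by turning its coordinates by the angles `t`,
measured in full turns. -/
noncomputable def torusRotation (w : ι → ℂ) (t : UnitAddTorus ι) : ι → ℂ :=
  fun i => w i * fourier 1 (t i)

theorem norm_torusRotation_apply (w : ι → ℂ) (t : UnitAddTorus ι) (i : ι) :
    ‖torusRotation w t i‖ = ‖w i‖ := by
  rw [torusRotation, norm_mul, fourier_apply, Circle.norm_coe, mul_one]

theorem continuous_torusRotation (w : ι → ℂ) : Continuous (torusRotation w) := by
  unfold torusRotation
  fun_prop

variable [Fintype ι]

theorem integrable_norm_eval_torusRotation_pow (w : ι → ℂ) (Q : MvPolynomial ι ℂ) (k : ℕ) :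
    Integrable fun t => ‖eval (torusRotation w t) Q‖ ^ k :=
  Continuous.integrable_of_hasCompactSupport
    (((continuous_eval Q).comp (continuous_torusRotation w)).norm.pow k)
    (HasCompactSupport.of_compactSpace _)

theorem eval_torusRotation (w : ι → ℂ) (t : UnitAddTorus ι) (Q : MvPolynomial ι ℂ) :
    eval (torusRotation w t) Q = ∑ α ∈ Q.support,
      (coeff α Q * ∏ i, w i ^ α i) * UnitAddTorus.mFourier (fun i => (α i : ℤ)) t := by
  rw [eval_eq']
  refine sum_congr rfl fun α _ => ?_
  have hchar (i : ι) : fourier 1 (t i) ^ α i = fourier (α i) (t i) := by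
    rw [fourier_apply, fourier_apply, one_smul, natCast_zsmul, AddCircle.toCircle_nsmul,
      Circle.coe_pow]
  simp only [torusRotation, UnitAddTorus.mFourier, ContinuousMap.coe_mk, mul_pow, prod_mul_distrib,
    hchar, mul_assoc]

theorem integral_sq_norm_eval_torusRotation (w : ι → ℂ) (Q : MvPolynomial ι ℂ) :
    ∫ t, ‖eval (torusRotation w t) Q‖ ^ 2 = ∑ α ∈ Q.support, ‖coeff α Q * ∏ i, w i ^ α i‖ ^ 2 := by
  let c (α : ι →₀ ℕ) : ℂ := coeff α Q * ∏ i, w i ^ α i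
  let k (α : ι →₀ ℕ) (i : ι) : ℤ := α i
  have hk : Function.Injective k := fun α β h =>
    Finsupp.ext fun i => Nat.cast_injective (congrFun h i)
  let F : C(UnitAddTorus ι, ℂ) := ∑ α ∈ Q.support, c α • UnitAddTorus.mFourier (k α)
  have hF (t : UnitAddTorus ι) : eval (torusRotation w t) Q = F t := by
    simp [eval_torusRotation, F, c, k]
  have hFLp : ContinuousMap.toLp 2 volume ℂ F
      = ∑ α ∈ Q.support, c α • UnitAddTorus.mFourierLp 2 (k α) := by
    simp only [F, map_sum, map_smul]
  have hinner := (UnitAddTorus.orthonormal_mFourier.comp k hk).inner_sum c c Q.support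
  simp only [Function.comp_apply] at hinner
  rw [← hFLp, ContinuousMap.inner_toLp] at hinner
  simp only [Complex.mul_conj', Complex.conj_mul'] at hinner
  simp only [hF]
  exact_mod_cast hinner

theorem norm_coeff_mul_prod_le {w : ι → ℂ} {Q : MvPolynomial ι ℂ} {K : ℝ}
    (hK : ∀ v : ι → ℂ, (∀ i, ‖v i‖ = ‖w i‖) → ‖eval v Q‖ ≤ K) (β : ι →₀ ℕ) :
    ‖coeff β Q * ∏ i, w i ^ β i‖ ≤ K := by
  have hK₀ : 0 ≤ K := (norm_nonneg _).trans (hK w fun _ => rfl)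
  by_cases hβ : β ∈ Q.support
  · refine le_of_sq_le_sq ?_ hK₀
    calc ‖coeff β Q * ∏ i, w i ^ β i‖ ^ 2
        ≤ ∑ α ∈ Q.support, ‖coeff α Q * ∏ i, w i ^ α i‖ ^ 2 :=
          single_le_sum (f := fun α => ‖coeff α Q * ∏ i, w i ^ α i‖ ^ 2)
            (fun _ _ => by positivity) hβ
      _ = ∫ t, ‖eval (torusRotation w t) Q‖ ^ 2 :=
          (integral_sq_norm_eval_torusRotation w Q).symm
      _ ≤ ∫ _ : UnitAddTorus ι, K ^ 2 := by
          refine integral_mono (integrable_norm_eval_torusRotation_pow w Q 2)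
            (integrable_const _) fun t => ?_
          gcongr
          exact hK _ (norm_torusRotation_apply w t)
      _ = K ^ 2 := by simp [probReal_univ]
  · simpa [notMem_support_iff.mp hβ] using hK₀

/- Parseval's identity for `Q ^ 2`, each coefficient of which is a sum of at most `4 ^ d` products
of coefficients of `Q`. -/
theorem integral_pow_four_norm_eval_torusRotation_le (w : ι → ℂ) {Q : MvPolynomial ι ℂ} {d : ℕ}
    (hQ : Q.IsHomogeneous d) :
    ∫ t, ‖eval (torusRotation w t) Q‖ ^ 4
      ≤ 4 ^ d * (∫ t, ‖eval (torusRotation w t) Q‖ ^ 2) ^ 2 := by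
  classical
  let c (α : ι →₀ ℕ) : ℝ := ‖coeff α Q * ∏ i, w i ^ α i‖ ^ 2
  have hcoeff : ∀ γ ∈ (Q ^ 2).support, ‖coeff γ (Q ^ 2) * ∏ i, w i ^ γ i‖ ^ 2
      ≤ 4 ^ d * ∑ x ∈ antidiagonal γ, c x.1 * c x.2 := by
    intro γ hγ
    have hdeg : γ.degree = 2 * d := by
      by_contra h
      exact mem_support_iff.mp hγ ((hQ.pow 2).coeff_eq_zero (mul_comm d 2 ▸ h))
    calc ‖coeff γ (Q ^ 2) * ∏ i, w i ^ γ i‖ ^ 2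
        = ‖coeff γ (Q * Q)‖ ^ 2 * ‖∏ i, w i ^ γ i‖ ^ 2 := by
          rw [norm_mul, mul_pow, pow_two Q]
      _ ≤ 2 ^ γ.degree * (∑ x ∈ antidiagonal γ, ‖coeff x.1 Q‖ ^ 2 * ‖coeff x.2 Q‖ ^ 2)
            * ‖∏ i, w i ^ γ i‖ ^ 2 := by
          gcongr
          exact sq_norm_coeff_mul_le Q Q γ
      _ = 4 ^ d * ∑ x ∈ antidiagonal γ, c x.1 * c x.2 := by
          rw [hdeg, pow_mul, mul_assoc, sum_mul]
          norm_num only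
          congr 1
          refine sum_congr rfl fun x hx => ?_
          rw [← mem_antidiagonal.mp hx]
          simp only [c, Finsupp.add_apply, pow_add, prod_mul_distrib, norm_mul]
          ring
  calc ∫ t, ‖eval (torusRotation w t) Q‖ ^ 4
      = ∫ t, ‖eval (torusRotation w t) (Q ^ 2)‖ ^ 2 := by
        simp only [map_pow, norm_pow, ← pow_mul]
    _ = ∑ γ ∈ (Q ^ 2).support, ‖coeff γ (Q ^ 2) * ∏ i, w i ^ γ i‖ ^ 2 :=
        integral_sq_norm_eval_torusRotation w (Q ^ 2)
    _ ≤ 4 ^ d * ∑ γ ∈ (Q ^ 2).support, ∑ x ∈ antidiagonal γ, c x.1 * c x.2 := by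
        rw [mul_sum]
        exact sum_le_sum hcoeff
    _ ≤ 4 ^ d * (∫ t, ‖eval (torusRotation w t) Q‖ ^ 2) ^ 2 := by
        rw [integral_sq_norm_eval_torusRotation]
        gcongr
        exact sum_sum_antidiagonal_le_sq_sum (c := c) (fun _ => sq_nonneg _)
          (fun α hα => by simp [c, notMem_support_iff.mp hα]) _

theorem sqrt_integral_sq_norm_eval_torusRotation_le (w : ι → ℂ) {Q : MvPolynomial ι ℂ} {d : ℕ}
    (hQ : Q.IsHomogeneous d) :
    √(∫ t, ‖eval (torusRotation w t) Q‖ ^ 2)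
      ≤ 2 ^ d * ∫ t, ‖eval (torusRotation w t) Q‖ := by
  have hHyper := integral_pow_four_norm_eval_torusRotation_le w hQ
  have hHolder := integral_sq_pow_three_le (μ := volume)
    (f := fun t => ‖eval (torusRotation w t) Q‖) (fun _ => norm_nonneg _)
    (by simpa using integrable_norm_eval_torusRotation_pow w Q 1)
    (integrable_norm_eval_torusRotation_pow w Q 4)
  have hA : 0 ≤ ∫ t, ‖eval (torusRotation w t) Q‖ := by positivity
  have hB : 0 ≤ ∫ t, ‖eval (torusRotation w t) Q‖ ^ 2 := by positivity
  set A := ∫ t, ‖eval (torusRotation w t) Q‖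
  set B := ∫ t, ‖eval (torusRotation w t) Q‖ ^ 2
  rw [Real.sqrt_le_left (by positivity)]
  obtain hB₀ | hB₀ := hB.eq_or_lt
  · rw [← hB₀]
    positivity
  · refine le_of_mul_le_mul_left ?_ (pow_pos hB₀ 2)
    calc B ^ 2 * B = B ^ 3 := by ring
      _ ≤ A ^ 2 * (4 ^ d * B ^ 2) := hHolder.trans (by gcongr)
      _ = B ^ 2 * (2 ^ d * A) ^ 2 := by
          rw [show (4 : ℝ) ^ d = (2 ^ d) ^ 2 by rw [pow_right_comm]; norm_num]
          ring

end Torus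

section Majorant

variable {ι : Type*}

/-- The majorant `|P| = ∑ |a_α| z^α` of a polynomial `P = ∑ a_α z^α`. -/
noncomputable def majorant (P : MvPolynomial ι ℂ) : MvPolynomial ι ℝ :=
  ∑ α ∈ P.support, monomial α ‖coeff α P‖

theorem coeff_majorant (P : MvPolynomial ι ℂ) (α : ι →₀ ℕ) :
    coeff α (majorant P) = ‖coeff α P‖ := by
  classical
  simp +contextual [majorant, coeff_sum, coeff_monomial, eq_comm]

theorem support_majorant (P : MvPolynomial ι ℂ) : (majorant P).support = P.support := by
  ext α
  simp [mem_support_iff, coeff_majorant]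

theorem isHomogeneous_majorant {P : MvPolynomial ι ℂ} {m : ℕ} (hP : P.IsHomogeneous m) :
    (majorant P).IsHomogeneous m := fun α hα => hP (by simpa [coeff_majorant] using hα)

theorem pderiv_majorant (k : ι) (P : MvPolynomial ι ℂ) :
    pderiv k (majorant P) = majorant (pderiv k P) := by
  ext α
  rw [coeff_pderiv, coeff_majorant, coeff_majorant, coeff_pderiv, norm_mul]
  norm_cast

theorem norm_eval_le_eval_majorant {P Q : MvPolynomial ι ℂ} (h : ∀ α, ‖coeff α Q‖ ≤ ‖coeff α P‖)
    (z : ι → ℂ) : ‖eval z Q‖ ≤ eval (fun i => ‖z i‖) (majorant P) := by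
  have hsub : Q.support ⊆ P.support := fun α hα => by
    rw [mem_support_iff] at hα ⊢
    exact norm_pos_iff.mp ((norm_pos_iff.mpr hα).trans_le (h α))
  rw [eval_eq, eval_eq, support_majorant]
  calc ‖∑ α ∈ Q.support, coeff α Q * ∏ i ∈ α.support, z i ^ α i‖
      ≤ ∑ α ∈ Q.support, ‖coeff α Q‖ * ∏ i ∈ α.support, ‖z i‖ ^ α i := by
        refine (norm_sum_le _ _).trans_eq (sum_congr rfl fun α _ => ?_)
        simp only [norm_mul, norm_prod, norm_pow]
    _ ≤ ∑ α ∈ P.support, ‖coeff α Q‖ * ∏ i ∈ α.support, ‖z i‖ ^ α i :=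
        sum_le_sum_of_subset_of_nonneg hsub fun _ _ _ => by positivity
    _ ≤ ∑ α ∈ P.support, coeff α (majorant P) * ∏ i ∈ α.support, ‖z i‖ ^ α i := by
        simp only [coeff_majorant]
        gcongr with α
        exact h α

end Majorant

theorem eval_smul_of_isHomogeneous {ι R : Type*} [CommSemiring R] (c : R) (w : ι → R)
    {P : MvPolynomial ι R} {m : ℕ} (hP : P.IsHomogeneous m) :
    eval (c • w) P = c ^ m * eval w P := by
  rw [eval_eq, eval_eq, mul_sum]
  refine sum_congr rfl fun α hα => ?_
  have hdeg : ∑ i ∈ α.support, α i = m :=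
    by_contra fun h => mem_support_iff.mp hα (hP.coeff_eq_zero h)
  simp only [Pi.smul_apply, smul_eq_mul, mul_pow, prod_mul_distrib, prod_pow_eq_pow_sum, hdeg]
  ring

section DirectionalDerivative

variable {ι R : Type*} [Fintype ι] [CommSemiring R]

/-- The directional derivative `D_u P = ∑ u_k ∂P/∂z_k` of a polynomial. -/
noncomputable def dirDeriv (u : ι → R) (P : MvPolynomial ι R) : MvPolynomial ι R :=
  ∑ k, u k • pderiv k P

theorem eval_dirDeriv (u w : ι → R) (P : MvPolynomial ι R) :
    eval w (dirDeriv u P) = ∑ k, u k * eval w (pderiv k P) := by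
  simp [dirDeriv]

theorem eval_dirDeriv_self (w : ι → R) {P : MvPolynomial ι R} {m : ℕ} (hP : P.IsHomogeneous m) :
    eval w (dirDeriv w P) = m * eval w P := by
  simpa [eval_dirDeriv] using congrArg (eval w) hP.sum_X_mul_pderiv

theorem isHomogeneous_dirDeriv (u : ι → R) {P : MvPolynomial ι R} {m : ℕ}
    (hP : P.IsHomogeneous m) : (dirDeriv u P).IsHomogeneous (m - 1) :=
  IsHomogeneous.sum _ _ _ fun k _ => by
    rw [smul_eq_C_mul]
    exact hP.pderiv.C_mul _

theorem hasDerivAt_eval_add_smul (w u : ι → ℂ) (P : MvPolynomial ι ℂ) (t : ℂ) :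
    HasDerivAt (fun t : ℂ => eval (w + t • u) P) (eval (w + t • u) (dirDeriv u P)) t := by
  classical
  induction P using MvPolynomial.induction_on with
  | C a => simpa [eval_dirDeriv] using hasDerivAt_const t a
  | add P Q hP hQ =>
    simpa [eval_dirDeriv, mul_add, sum_add_distrib, ← Pi.add_def] using hP.add hQ
  | mul_X P i hP =>
    have hX : HasDerivAt (fun t : ℂ => w i + t * u i) (u i) t := by
      simpa using ((hasDerivAt_id t).mul_const (u i)).const_add (w i)
    have hleibniz : eval (w + t • u) (dirDeriv u P) * (w i + t * u i) + eval (w + t • u) P * u i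
        = eval (w + t • u) (dirDeriv u (P * X i)) := by
      simp only [eval_dirDeriv, Derivation.leibniz, pderiv_X, Pi.single_apply, smul_eq_mul, map_add,
        map_mul, eval_X, apply_ite (eval _), map_zero, mul_add, mul_ite, mul_zero, mul_one,
        sum_add_distrib, sum_ite_eq, mem_univ, if_true, Pi.add_apply, Pi.smul_apply]
      simp only [mul_left_comm _ (_ + _), ← mul_sum]
      ring
    simpa [← Pi.mul_def] using (hP.mul hX).congr_deriv hleibniz

/- Cauchy's estimate for `t ↦ P (w + t u)` on the unit circle, where `N (w + t u) ≤ 2`. -/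
theorem norm_eval_dirDeriv_le (N : Seminorm ℂ (ι → ℂ)) {P : MvPolynomial ι ℂ} {m : ℕ}
    (hP : P.IsHomogeneous m) {S : ℝ} (hS : ∀ v, N v < 1 → ‖eval v P‖ ≤ S) {w u : ι → ℂ}
    (hw : N w ≤ 1) (hu : N u < 1) : ‖eval w (dirDeriv u P)‖ ≤ 2 ^ m * S := by
  have hsphere : ∀ t ∈ Metric.sphere (0 : ℂ) 1, ‖eval (w + t • u) P‖ ≤ 2 ^ m * S := by
    intro t ht
    have hN : N ((2⁻¹ : ℂ) • (w + t • u)) < 1 := by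
      rw [map_smul_eq_mul]
      have := map_add_le_add N w (t • u)
      rw [map_smul_eq_mul, mem_sphere_zero_iff_norm.mp ht] at this
      norm_num
      linarith
    have h := hS _ hN
    rw [eval_smul_of_isHomogeneous _ _ hP, norm_mul] at h
    have h2 : (2 : ℝ) ^ m * ‖(2⁻¹ : ℂ) ^ m‖ = 1 := by
      simp
    calc ‖eval (w + t • u) P‖ = 2 ^ m * (‖(2⁻¹ : ℂ) ^ m‖ * ‖eval (w + t • u) P‖) := by
          rw [← mul_assoc, h2, one_mul]
      _ ≤ 2 ^ m * S := by gcongr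
  have hderiv := hasDerivAt_eval_add_smul w u P 0
  have h := Complex.norm_deriv_le_of_forall_mem_sphere_norm_le one_pos
    (f := fun t : ℂ => eval (w + t • u) P) (c := 0) (C := 2 ^ m * S)
    (Differentiable.diffContOnCl fun t => (hasDerivAt_eval_add_smul w u P t).differentiableAt)
    hsphere
  simpa [hderiv.deriv] using h

end DirectionalDerivative

section Counting

variable {ι : Type*} [Fintype ι]

theorem support_subset_finsuppAntidiag {R : Type*} [CommSemiring R] [DecidableEq ι]
    {Q : MvPolynomial ι R} {d : ℕ} (hQ : Q.IsHomogeneous d) :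
    Q.support ⊆ univ.finsuppAntidiag d := fun α hα => by
  have hdeg : α.degree = d := by_contra fun h => mem_support_iff.mp hα (hQ.coeff_eq_zero h)
  simpa [Finsupp.degree_eq_sum] using hdeg

theorem card_support_le_multichoose {R : Type*} [CommSemiring R] {Q : MvPolynomial ι R} {d : ℕ}
    (hQ : Q.IsHomogeneous d) : #Q.support ≤ (Fintype.card ι).multichoose d := by
  classical
  simpa [card_finsuppAntidiag_nat_eq_multichoose] using
    card_le_card (support_subset_finsuppAntidiag hQ)

theorem multichoose_le_exp_mul_pow (n d : ℕ) :
    (n.multichoose d : ℝ) ≤ Real.exp (d + 1) * (1 + n / (d + 1)) ^ d := by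
  calc (n.multichoose d : ℝ)
      ≤ ((n + d - 1 : ℕ) : ℝ) ^ d / d.factorial := by
        rw [Nat.multichoose_eq]
        exact Nat.choose_le_pow_div d _
    _ ≤ ((d + 1 : ℝ) * (1 + n / (d + 1))) ^ d / d.factorial := by
        have : ((n + d - 1 : ℕ) : ℝ) ≤ (d + 1) * (1 + n / (d + 1)) := by
          rw [mul_add, mul_div_cancel₀ _ (by positivity)]
          exact_mod_cast (by lia : n + d - 1 ≤ (d + 1) * 1 + n)
        gcongr
    _ = (d + 1 : ℝ) ^ d / d.factorial * (1 + n / (d + 1)) ^ d := by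
        rw [mul_pow, mul_div_right_comm]
    _ ≤ Real.exp (d + 1) * (1 + n / (d + 1)) ^ d := by
        gcongr
        exact Real.pow_div_factorial_le_exp _ (by positivity) d

theorem multichoose_rpow_le_exp_mul_rpow (n d : ℕ) {θ : ℝ} (hθ₀ : 0 ≤ θ) (hθ₁ : θ ≤ 1) :
    (n.multichoose d : ℝ) ^ θ ≤ Real.exp (d + 1) * (1 + n / (d + 1)) ^ (d * θ) := by
  calc (n.multichoose d : ℝ) ^ θ
      ≤ (Real.exp (d + 1) * (1 + n / (d + 1)) ^ d) ^ θ := by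
        gcongr
        exact multichoose_le_exp_mul_pow n d
    _ = Real.exp (d + 1) ^ θ * (1 + n / (d + 1)) ^ (d * θ) := by
        rw [Real.mul_rpow (by positivity) (by positivity), Real.rpow_mul (by positivity),
          Real.rpow_natCast]
    _ ≤ Real.exp (d + 1) * (1 + n / (d + 1)) ^ (d * θ) := by
        gcongr
        exact Real.rpow_le_self_of_one_le (Real.one_le_exp (by positivity)) hθ₁

theorem one_le_exp_mul_multinomial_mul_prod (β : ι → ℕ) {d : ℕ} (hβ : ∑ i, β i = d) :
    1 ≤ Real.exp d * Nat.multinomial univ β * ∏ i, ((β i : ℝ) / d) ^ β i := by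
  have hfac : (d : ℝ) ^ d ≤ Real.exp d * d.factorial :=
    (div_le_iff₀ (by positivity)).mp (Real.pow_div_factorial_le_exp _ d.cast_nonneg d)
  have hspec : (d.factorial : ℝ) = (∏ i, ((β i).factorial : ℝ)) * Nat.multinomial univ β := by
    rw [← hβ, ← Nat.multinomial_spec]
    push_cast
    rfl
  have hprod : ∏ i, ((β i).factorial : ℝ) ≤ ∏ i, (β i : ℝ) ^ β i :=
    prod_le_prod (fun _ _ => by positivity) fun i _ => by exact_mod_cast Nat.factorial_le_pow _
  have hd : (0 : ℝ) < (d : ℝ) ^ d := by exact_mod_cast Nat.pow_self_pos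
  simp only [div_pow, prod_div_distrib, prod_pow_eq_pow_sum, hβ]
  rw [← mul_div_assoc, one_le_div hd]
  calc (d : ℝ) ^ d ≤ Real.exp d * ((∏ i, ((β i).factorial : ℝ)) * Nat.multinomial univ β) :=
        hspec ▸ hfac
    _ ≤ Real.exp d * ((∏ i, (β i : ℝ) ^ β i) * Nat.multinomial univ β) := by gcongr
    _ = Real.exp d * Nat.multinomial univ β * ∏ i, (β i : ℝ) ^ β i := by ring

theorem one_le_exp_mul_multinomial_rpow_mul_prod {q : ℝ} (hq : 1 ≤ q) (β : ι → ℕ) {d : ℕ}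
    (hβ : ∑ i, β i = d) :
    1 ≤ Real.exp d * (Nat.multinomial univ β : ℝ) ^ (1 / q)
      * ∏ i, (((β i : ℝ) / d) ^ (1 / q)) ^ β i := by
  have hexp : Real.exp d ^ (1 / q) ≤ Real.exp d :=
    Real.rpow_le_self_of_one_le (Real.one_le_exp (by positivity))
      ((div_le_one (by positivity)).mpr hq)
  calc 1 ≤ (Real.exp d * Nat.multinomial univ β * ∏ i, ((β i : ℝ) / d) ^ β i) ^ (1 / q) :=
        Real.one_le_rpow (one_le_exp_mul_multinomial_mul_prod β hβ) (by positivity)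
    _ = Real.exp d ^ (1 / q) * (Nat.multinomial univ β : ℝ) ^ (1 / q)
          * ∏ i, (((β i : ℝ) / d) ^ (1 / q)) ^ β i := by
        rw [Real.mul_rpow (by positivity) (by positivity),
          Real.mul_rpow (by positivity) (by positivity),
          ← Real.finsetProd_rpow _ _ fun i _ => by positivity]
        simp only [Real.rpow_pow_comm (show 0 ≤ (β _ : ℝ) / d by positivity)]
    _ ≤ _ := by gcongr

theorem sum_multinomial_mul_prod {R : Type*} [CommSemiring R] [DecidableEq ι] (x : ι → R)
    (d : ℕ) :
    ∑ β ∈ univ.finsuppAntidiag d, (Nat.multinomial univ β : R) * ∏ i, x i ^ β i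
      = (∑ i, x i) ^ d := by
  rw [sum_pow_eq_sum_piAntidiag]
  exact sum_equiv Finsupp.equivFunOnFinite (by simp) fun _ _ => rfl

theorem sum_multinomial_rpow_mul_prod_le [DecidableEq ι] {q : ℝ} (hq : 1 ≤ q) {x : ι → ℝ}
    (hx : ∀ i, 0 ≤ x i) (hxq : ∑ i, x i ^ q ≤ 1) (d : ℕ) :
    ∑ β ∈ univ.finsuppAntidiag d, (Nat.multinomial univ β : ℝ) ^ (1 / q) * ∏ i, x i ^ β i
      ≤ ((Fintype.card ι).multichoose d : ℝ) ^ (1 - 1 / q) := by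
  have hq₀ : 0 < q := by linarith
  have hterm (β : ι →₀ ℕ) : ((Nat.multinomial univ β : ℝ) ^ (1 / q) * ∏ i, x i ^ β i) ^ q
      = Nat.multinomial univ β * ∏ i, (x i ^ q) ^ β i := by
    rw [Real.mul_rpow (by positivity) (prod_nonneg fun i _ => pow_nonneg (hx i) _),
      ← Real.rpow_mul (by positivity), one_div_mul_cancel hq₀.ne', Real.rpow_one,
      ← Real.finsetProd_rpow _ _ fun i _ => pow_nonneg (hx i) _]
    simp only [Real.rpow_pow_comm (hx _)]
  have hnonneg (β : ι →₀ ℕ) :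
      0 ≤ (Nat.multinomial univ β : ℝ) ^ (1 / q) * ∏ i, x i ^ β i :=
    mul_nonneg (by positivity) (prod_nonneg fun i _ => pow_nonneg (hx i) _)
  refine (Real.rpow_le_rpow_iff (sum_nonneg fun β _ => hnonneg β) (by positivity) hq₀).mp ?_
  calc (∑ β ∈ univ.finsuppAntidiag d, (Nat.multinomial univ β : ℝ) ^ (1 / q) * ∏ i, x i ^ β i) ^ q
      ≤ ((Fintype.card ι).multichoose d : ℝ) ^ (q - 1) * ∑ β ∈ univ.finsuppAntidiag d,
          ((Nat.multinomial univ β : ℝ) ^ (1 / q) * ∏ i, x i ^ β i) ^ q := by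
        rw [← card_univ, ← card_finsuppAntidiag_nat_eq_multichoose]
        exact Real.rpow_sum_le_const_mul_sum_rpow_of_nonneg _ hq fun β _ => hnonneg β
    _ = ((Fintype.card ι).multichoose d : ℝ) ^ (q - 1) * (∑ i, x i ^ q) ^ d := by
        simp only [hterm, sum_multinomial_mul_prod]
    _ ≤ ((Fintype.card ι).multichoose d : ℝ) ^ (q - 1) * 1 := by
        gcongr
        exact pow_le_one₀ (sum_nonneg fun i _ => Real.rpow_nonneg (hx i) q) hxq
    _ = (((Fintype.card ι).multichoose d : ℝ) ^ (1 - 1 / q)) ^ q := by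
        rw [mul_one, ← Real.rpow_mul (by positivity), sub_mul, one_mul,
          one_div_mul_cancel hq₀.ne']

end Counting

section Absolute

variable {ι : Type*} [Fintype ι]

theorem exists_norm_eq_sum_mul_eq (r b : ι → ℂ) :
    ∃ u : ι → ℂ, (∀ i, ‖u i‖ = ‖r i‖) ∧ ∑ i, u i * b i = ((∑ i, ‖r i‖ * ‖b i‖ : ℝ) : ℂ) := by
  choose c hc hcb using fun i => Complex.exists_norm_eq_mul_self (b i)
  refine ⟨fun i => ‖r i‖ * c i, fun i => by simp [hc], ?_⟩
  push_cast
  exact sum_congr rfl fun i _ => by rw [hcb]; ring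

/-- A seminorm on `ℂ^ι` is absolute if it only depends on the moduli of the coordinates, that is,
if its unit ball is a Reinhardt domain. -/
def IsAbsolute (N : Seminorm ℂ (ι → ℂ)) : Prop :=
  ∀ v w : ι → ℂ, (∀ i, ‖v i‖ = ‖w i‖) → N v = N w

variable {N : Seminorm ℂ (ι → ℂ)} {P : MvPolynomial ι ℂ} {m d : ℕ} {S : ℝ} {z : ι → ℂ}

theorem IsAbsolute.sum_norm_mul_norm_eval_pderiv_le (hN : IsAbsolute N) (hP : P.IsHomogeneous m)
    (hS : ∀ v, N v < 1 → ‖eval v P‖ ≤ S) (hz : N z < 1) {w : ι → ℂ} (hw : N w ≤ 1) :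
    ∑ k, ‖z k‖ * ‖eval w (pderiv k P)‖ ≤ 2 ^ m * S := by
  obtain ⟨u, hu, hsum⟩ := exists_norm_eq_sum_mul_eq z fun k => eval w (pderiv k P)
  have h := norm_eval_dirDeriv_le N hP hS hw (hN u z hu ▸ hz)
  rw [eval_dirDeriv, hsum, Complex.norm_real] at h
  exact (le_abs_self _).trans h

theorem eval_majorant_le_sqrt_mul_integral (w : ι → ℂ) {Q : MvPolynomial ι ℂ}
    (hQ : Q.IsHomogeneous d) :
    eval (fun i => ‖w i‖) (majorant Q) ≤ √((Fintype.card ι).multichoose d)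
      * (2 ^ d * ∫ t, ‖eval (torusRotation w t) Q‖) := by
  calc eval (fun i => ‖w i‖) (majorant Q)
      = ∑ α ∈ Q.support, 1 * ‖coeff α Q * ∏ i, w i ^ α i‖ := by
        simp [eval_eq', support_majorant, coeff_majorant]
    _ ≤ √(∑ α ∈ Q.support, 1 ^ 2) * √(∑ α ∈ Q.support, ‖coeff α Q * ∏ i, w i ^ α i‖ ^ 2) :=
        Real.sum_mul_le_sqrt_mul_sqrt ..
    _ ≤ √((Fintype.card ι).multichoose d)
          * (2 ^ d * ∫ t, ‖eval (torusRotation w t) Q‖) := by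
        rw [← integral_sq_norm_eval_torusRotation]
        gcongr
        · simpa using card_support_le_multichoose hQ
        · exact sqrt_integral_sq_norm_eval_torusRotation_le w hQ

theorem IsAbsolute.eval_dirDeriv_majorant_le (hN : IsAbsolute N) (hP : P.IsHomogeneous (d + 1))
    (hS : ∀ v, N v < 1 → ‖eval v P‖ ≤ S) (hz : N z < 1) :
    eval (fun i => ‖z i‖) (dirDeriv (fun i => ‖z i‖) (majorant P))
      ≤ √((Fintype.card ι).multichoose d) * (2 ^ d * (2 ^ (d + 1) * S)) := by
  have hint (k : ι) : Integrable fun t => ‖z k‖ * ‖eval (torusRotation z t) (pderiv k P)‖ := by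
    simpa using (integrable_norm_eval_torusRotation_pow z (pderiv k P) 1).const_mul ‖z k‖
  have hmean : ∑ k, ‖z k‖ * ∫ t, ‖eval (torusRotation z t) (pderiv k P)‖ ≤ 2 ^ (d + 1) * S := by
    calc ∑ k, ‖z k‖ * ∫ t, ‖eval (torusRotation z t) (pderiv k P)‖
        = ∫ t, ∑ k, ‖z k‖ * ‖eval (torusRotation z t) (pderiv k P)‖ := by
          rw [integral_finsetSum _ fun k _ => hint k]
          simp only [integral_const_mul]
      _ ≤ ∫ _ : UnitAddTorus ι, 2 ^ (d + 1) * S := by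
          refine integral_mono (integrable_finsetSum _ fun k _ => hint k) (integrable_const _)
            fun t => hN.sum_norm_mul_norm_eval_pderiv_le hP hS hz ?_
          exact (hN _ z (norm_torusRotation_apply z t)).trans_le hz.le
      _ = 2 ^ (d + 1) * S := by simp [probReal_univ]
  calc eval (fun i => ‖z i‖) (dirDeriv (fun i => ‖z i‖) (majorant P))
      = ∑ k, ‖z k‖ * eval (fun i => ‖z i‖) (majorant (pderiv k P)) := by
        simp only [eval_dirDeriv, pderiv_majorant]
    _ ≤ ∑ k, ‖z k‖ * (√((Fintype.card ι).multichoose d)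
          * (2 ^ d * ∫ t, ‖eval (torusRotation z t) (pderiv k P)‖)) := by
        gcongr with k
        exact eval_majorant_le_sqrt_mul_integral z hP.pderiv
    _ = √((Fintype.card ι).multichoose d)
          * (2 ^ d * ∑ k, ‖z k‖ * ∫ t, ‖eval (torusRotation z t) (pderiv k P)‖) := by
        simp only [mul_sum]
        exact sum_congr rfl fun k _ => by ring
    _ ≤ √((Fintype.card ι).multichoose d) * (2 ^ d * (2 ^ (d + 1) * S)) := by gcongr

end Absolute

section PowerSum

variable {ι : Type*} [Fintype ι] {q : ℝ}

/- Cauchy's estimate on the polytorus of radii `(β i / d) ^ (1 / q)`, which maximise `∏ r i ^ β i`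
over the unit ball. -/
theorem norm_coeff_le_of_sum_rpow_le {Q : MvPolynomial ι ℂ} {d : ℕ} {K : ℝ} (hq : 1 ≤ q)
    (hK : ∀ v : ι → ℂ, ∑ i, ‖v i‖ ^ q ≤ 1 → ‖eval v Q‖ ≤ K) {β : ι →₀ ℕ} (hβ : β.degree = d) :
    ‖coeff β Q‖ ≤ K * (Real.exp d * (Nat.multinomial univ β : ℝ) ^ (1 / q)) := by
  have hq₀ : 0 < q := by linarith
  have hβ' : ∑ i, β i = d := by rw [← hβ, Finsupp.degree_eq_sum]
  let r (i : ι) : ℝ := ((β i : ℝ) / d) ^ (1 / q)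
  have hr (i : ι) : 0 ≤ r i := by positivity
  have hrq (i : ι) : r i ^ q = (β i : ℝ) / d := by
    rw [← Real.rpow_mul (by positivity), one_div_mul_cancel hq₀.ne', Real.rpow_one]
  have hsum : ∑ i, r i ^ q ≤ 1 := by
    simp only [hrq, ← sum_div, ← Nat.cast_sum, hβ']
    exact div_self_le_one (d : ℝ)
  have hCauchy : ‖coeff β Q‖ * ∏ i, r i ^ β i ≤ K := by
    have h := norm_coeff_mul_prod_le (w := fun i => (r i : ℂ)) (Q := Q) (K := K)
      (fun v hv => hK v (by simpa [hv, abs_of_nonneg (hr _)] using hsum)) β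
    simpa [norm_prod, abs_of_nonneg (hr _)] using h
  have hone := one_le_exp_mul_multinomial_rpow_mul_prod hq β hβ'
  calc ‖coeff β Q‖
      ≤ ‖coeff β Q‖ * (Real.exp d * (Nat.multinomial univ β : ℝ) ^ (1 / q) * ∏ i, r i ^ β i) :=
        le_mul_of_one_le_right (norm_nonneg _) hone
    _ = ‖coeff β Q‖ * (∏ i, r i ^ β i) * (Real.exp d * (Nat.multinomial univ β : ℝ) ^ (1 / q)) := by
        ring
    _ ≤ K * (Real.exp d * (Nat.multinomial univ β : ℝ) ^ (1 / q)) := by gcongr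

theorem exists_coeff_dirDeriv_majorant_eq (z : ι → ℂ) (P : MvPolynomial ι ℂ) (β : ι →₀ ℕ) :
    ∃ u : ι → ℂ, (∀ i, ‖u i‖ = ‖z i‖) ∧
      coeff β (dirDeriv (fun i => ‖z i‖) (majorant P)) = ‖coeff β (dirDeriv u P)‖ := by
  obtain ⟨u, hu, hsum⟩ := exists_norm_eq_sum_mul_eq z fun k => coeff β (pderiv k P)
  refine ⟨u, hu, ?_⟩
  simp only [dirDeriv, coeff_sum, coeff_smul, smul_eq_mul, pderiv_majorant, coeff_majorant, hsum,
    Complex.norm_real]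
  exact (Real.norm_of_nonneg (by positivity)).symm

theorem eval_dirDeriv_majorant_le_of_sum_rpow_le (hq : 1 ≤ q) {P : MvPolynomial ι ℂ} {d : ℕ}
    (hP : P.IsHomogeneous (d + 1)) {K : ℝ} {z : ι → ℂ} (hz : ∑ i, ‖z i‖ ^ q ≤ 1)
    (hK : ∀ u v : ι → ℂ, (∀ i, ‖u i‖ = ‖z i‖) → ∑ i, ‖v i‖ ^ q ≤ 1 → ‖eval v (dirDeriv u P)‖ ≤ K) :
    eval (fun i => ‖z i‖) (dirDeriv (fun i => ‖z i‖) (majorant P))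
      ≤ ((Fintype.card ι).multichoose d : ℝ) ^ (1 - 1 / q) * (Real.exp d * K) := by
  classical
  have hK₀ : 0 ≤ K := (norm_nonneg _).trans (hK z z (fun _ => rfl) hz)
  have hcoeff : ∀ β ∈ univ.finsuppAntidiag d,
      coeff β (dirDeriv (fun i => ‖z i‖) (majorant P))
        ≤ K * (Real.exp d * (Nat.multinomial univ β : ℝ) ^ (1 / q)) := by
    intro β hβ
    obtain ⟨u, hu, hcoeff⟩ := exists_coeff_dirDeriv_majorant_eq z P β
    rw [hcoeff]
    exact norm_coeff_le_of_sum_rpow_le hq (hK u · hu) (by simpa [Finsupp.degree_eq_sum] using hβ)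
  have hhom := isHomogeneous_dirDeriv (fun i => ‖z i‖) (isHomogeneous_majorant hP)
  calc eval (fun i => ‖z i‖) (dirDeriv (fun i => ‖z i‖) (majorant P))
      = ∑ β ∈ univ.finsuppAntidiag d,
          coeff β (dirDeriv (fun i => ‖z i‖) (majorant P)) * ∏ i, ‖z i‖ ^ β i := by
        rw [eval_eq']
        exact sum_subset (support_subset_finsuppAntidiag hhom) fun β _ hβ => by
          rw [notMem_support_iff.mp hβ, zero_mul]
    _ ≤ ∑ β ∈ univ.finsuppAntidiag d,
          K * (Real.exp d * (Nat.multinomial univ β : ℝ) ^ (1 / q)) * ∏ i, ‖z i‖ ^ β i := by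
        gcongr with β hβ
        exact hcoeff β hβ
    _ = (∑ β ∈ univ.finsuppAntidiag d,
          (Nat.multinomial univ β : ℝ) ^ (1 / q) * ∏ i, ‖z i‖ ^ β i) * (Real.exp d * K) := by
        rw [sum_mul]
        exact sum_congr rfl fun _ _ => by ring
    _ ≤ ((Fintype.card ι).multichoose d : ℝ) ^ (1 - 1 / q) * (Real.exp d * K) := by
        gcongr
        exact sum_multinomial_rpow_mul_prod_le hq (fun _ => norm_nonneg _) hz d

end PowerSum

section LpSeminorm

variable {ι : Type*} [Fintype ι] (p : ℝ≥0∞) [Fact (1 ≤ p)]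

/-- The `ℓ_p`-norm on `ℂ^ι`, transported from `PiLp` to the function type underlying it. -/
noncomputable def lpSeminorm : Seminorm ℂ (ι → ℂ) :=
  (normSeminorm ℂ (PiLp p fun _ : ι => ℂ)).comp (WithLp.linearEquiv p ℂ (ι → ℂ)).symm.toLinearMap

theorem lpSeminorm_eq_pNorm {n : ℕ} (z : Fin n → ℂ) : lpSeminorm p z = pNorm p z := by
  change ‖WithLp.toLp p z‖ = pNorm p z
  unfold pNorm
  split_ifs with hp
  · subst hp
    exact PiLp.norm_eq_ciSup _
  · exact PiLp.norm_eq_sum (ENNReal.toReal_pos (zero_lt_one.trans_le Fact.out).ne' hp) _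

theorem isAbsolute_lpSeminorm : IsAbsolute (lpSeminorm p : Seminorm ℂ (ι → ℂ)) := by
  intro v w h
  change ‖WithLp.toLp p v‖ = ‖WithLp.toLp p w‖
  obtain hp | hp := eq_or_ne p ∞
  · subst hp
    simp [PiLp.norm_eq_ciSup, h]
  · simp [PiLp.norm_eq_sum (ENNReal.toReal_pos (zero_lt_one.trans_le Fact.out).ne' hp), h]

variable {p}

theorem norm_apply_le_lpSeminorm (z : ι → ℂ) (i : ι) : ‖z i‖ ≤ lpSeminorm p z :=
  PiLp.norm_apply_le (WithLp.toLp p z) i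

theorem lpSeminorm_le_one_iff (hp : p ≠ ∞) (z : ι → ℂ) :
    lpSeminorm p z ≤ 1 ↔ ∑ i, ‖z i‖ ^ p.toReal ≤ 1 := by
  have hp₀ : 0 < p.toReal := ENNReal.toReal_pos (zero_lt_one.trans_le Fact.out).ne' hp
  change ‖WithLp.toLp p z‖ ≤ 1 ↔ _
  rw [PiLp.norm_eq_sum hp₀, one_div, Real.rpow_inv_le_iff_of_pos (by positivity) zero_le_one hp₀,
    Real.one_rpow]

theorem eval_dirDeriv_majorant_le_of_lpSeminorm_lt_one {P : MvPolynomial ι ℂ} {d : ℕ}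
    (hP : P.IsHomogeneous (d + 1)) {S : ℝ} (hS : ∀ v, lpSeminorm p v < 1 → ‖eval v P‖ ≤ S)
    {z : ι → ℂ} (hz : lpSeminorm p z < 1) :
    eval (fun i => ‖z i‖) (dirDeriv (fun i => ‖z i‖) (majorant P))
      ≤ ((Fintype.card ι).multichoose d : ℝ) ^ (1 - 1 / (min p 2).toReal)
        * (Real.exp d * (2 ^ (d + 1) * S)) := by
  obtain hp | hp := le_total p 2
  · have hp_top : p ≠ ∞ := ne_top_of_le_ne_top ENNReal.ofNat_ne_top hp
    have hp_one : 1 ≤ p.toReal := ENNReal.toReal_mono hp_top (Fact.out : 1 ≤ p)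
    rw [min_eq_left hp]
    refine eval_dirDeriv_majorant_le_of_sum_rpow_le hp_one hP
      ((lpSeminorm_le_one_iff hp_top z).mp hz.le) fun u v hu hv => ?_
    exact norm_eval_dirDeriv_le (lpSeminorm p) hP hS ((lpSeminorm_le_one_iff hp_top v).mpr hv)
      (isAbsolute_lpSeminorm p u z hu ▸ hz)
  · have hS₀ : 0 ≤ S := (norm_nonneg _).trans (hS z hz)
    have htwo : (2 : ℝ) ^ d ≤ Real.exp d := by
      rw [← Real.exp_one_pow]
      exact pow_le_pow_left₀ zero_le_two Real.exp_one_gt_two.le d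
    calc eval (fun i => ‖z i‖) (dirDeriv (fun i => ‖z i‖) (majorant P))
        ≤ √((Fintype.card ι).multichoose d) * (2 ^ d * (2 ^ (d + 1) * S)) :=
          (isAbsolute_lpSeminorm p).eval_dirDeriv_majorant_le hP hS hz
      _ ≤ √((Fintype.card ι).multichoose d) * (Real.exp d * (2 ^ (d + 1) * S)) := by gcongr
      _ = ((Fintype.card ι).multichoose d : ℝ) ^ (1 - 1 / (min p 2).toReal)
            * (Real.exp d * (2 ^ (d + 1) * S)) := by
          rw [min_eq_right hp, Real.sqrt_eq_rpow]
          norm_num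

theorem eval_majorant_le_of_lpSeminorm_lt_one {P : MvPolynomial ι ℂ} {d : ℕ}
    (hP : P.IsHomogeneous (d + 1)) {S : ℝ} (hS : ∀ v, lpSeminorm p v < 1 → ‖eval v P‖ ≤ S)
    {z : ι → ℂ} (hz : lpSeminorm p z < 1) :
    eval (fun i => ‖z i‖) (majorant P)
      ≤ (2 * Real.exp 2) ^ (d + 1)
        * (1 + Fintype.card ι / (d + 1)) ^ (d * (1 - 1 / (min p 2).toReal)) * S := by
  have hS₀ : 0 ≤ S := (norm_nonneg _).trans (hS z hz)
  have hmin : 1 ≤ (min p 2).toReal :=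
    ENNReal.toReal_mono (ne_top_of_le_ne_top ENNReal.ofNat_ne_top (min_le_right p 2))
      (le_min Fact.out one_le_two)
  have hθ₀ : 0 ≤ 1 - 1 / (min p 2).toReal := by
    rw [sub_nonneg, div_le_one (by positivity)]
    exact hmin
  have hθ₁ : 1 - 1 / (min p 2).toReal ≤ 1 := sub_le_self _ (by positivity)
  set θ := 1 - 1 / (min p 2).toReal
  calc eval (fun i => ‖z i‖) (majorant P)
      ≤ (d + 1 : ℕ) * eval (fun i => ‖z i‖) (majorant P) :=
        le_mul_of_one_le_left
          ((norm_nonneg _).trans (norm_eval_le_eval_majorant (fun _ => le_rfl) z)) (by simp)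
    _ = eval (fun i => ‖z i‖) (dirDeriv (fun i => ‖z i‖) (majorant P)) :=
        (eval_dirDeriv_self _ (isHomogeneous_majorant hP)).symm
    _ ≤ ((Fintype.card ι).multichoose d : ℝ) ^ θ * (Real.exp d * (2 ^ (d + 1) * S)) :=
        eval_dirDeriv_majorant_le_of_lpSeminorm_lt_one hP hS hz
    _ ≤ Real.exp (d + 1) * (1 + Fintype.card ι / (d + 1)) ^ (d * θ)
          * (Real.exp (d + 1) * (2 ^ (d + 1) * S)) := by
        gcongr
        · exact multichoose_rpow_le_exp_mul_rpow _ d hθ₀ hθ₁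
        · linarith
    _ = (2 * Real.exp 2) ^ (d + 1) * (1 + Fintype.card ι / (d + 1)) ^ (d * θ) * S := by
        have : Real.exp 2 ^ (d + 1) = Real.exp (d + 1) * Real.exp (d + 1) := by
          rw [← Real.exp_nat_mul, ← Real.exp_add]
          push_cast
          ring_nf
        rw [mul_pow, this]
        ring

end LpSeminorm

section HomogeneousOfCoeffs

variable {n m : ℕ}

/-- The `m`-homogeneous polynomial `∑ a_α z^α` with coefficient family `a`. -/
noncomputable def homogeneousOfCoeffs (m : ℕ) (a : (Fin n → ℕ) → ℂ) : MvPolynomial (Fin n) ℂ :=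
  ∑ α ∈ Finset.Nat.antidiagonalTuple n m, monomial (Finsupp.equivFunOnFinite.symm α) (a α)

theorem eval_homogeneousOfCoeffs (a : (Fin n → ℕ) → ℂ) (z : Fin n → ℂ) :
    eval z (homogeneousOfCoeffs m a) = mhEval n m a z := by
  simp [homogeneousOfCoeffs, mhEval, eval_monomial, Finsupp.prod_fintype]

theorem isHomogeneous_homogeneousOfCoeffs (a : (Fin n → ℕ) → ℂ) :
    (homogeneousOfCoeffs m a).IsHomogeneous m :=
  IsHomogeneous.sum _ _ _ fun α hα => isHomogeneous_monomial _ <| by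
    simpa [Finsupp.degree_eq_sum] using Finset.Nat.mem_antidiagonalTuple.mp hα

theorem coeff_homogeneousOfCoeffs (a : (Fin n → ℕ) → ℂ) (β : Fin n →₀ ℕ) :
    coeff β (homogeneousOfCoeffs m a) = if ∑ i, β i = m then a β else 0 := by
  change _ = if ∑ i, β i = m then a (Finsupp.equivFunOnFinite β) else 0
  simp [homogeneousOfCoeffs, coeff_sum, coeff_monomial, Equiv.symm_apply_eq,
    Finset.Nat.mem_antidiagonalTuple]

theorem norm_coeff_homogeneousOfCoeffs_mul_le {a ε : (Fin n → ℕ) → ℂ} (hε : ∀ α, ‖ε α‖ ≤ 1)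
    (β : Fin n →₀ ℕ) : ‖coeff β (homogeneousOfCoeffs m fun α => ε α * a α)‖
      ≤ ‖coeff β (homogeneousOfCoeffs m a)‖ := by
  simp only [coeff_homogeneousOfCoeffs]
  split_ifs
  · simpa using mul_le_mul_of_nonneg_right (hε β) (norm_nonneg (a β))
  · exact le_rfl

theorem norm_mhEval_le_sSup {p : ℝ≥0∞} [Fact (1 ≤ p)] (a : (Fin n → ℕ) → ℂ) {w : Fin n → ℂ}
    (hw : pNorm p w < 1) :
    ‖mhEval n m a w‖ ≤ sSup {x : ℝ | ∃ w, pNorm p w < 1 ∧ x = ‖mhEval n m a w‖} := by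
  refine le_csSup ⟨∑ α ∈ Finset.Nat.antidiagonalTuple n m, ‖a α‖, ?_⟩ ⟨w, hw, rfl⟩
  rintro _ ⟨v, hv, rfl⟩
  refine norm_sum_le_of_le _ fun α _ => ?_
  rw [norm_mul, norm_prod]
  refine mul_le_of_le_one_right (norm_nonneg _) (prod_le_one (fun _ _ => norm_nonneg _) ?_)
  intro i _
  rw [norm_pow]
  exact pow_le_one₀ (norm_nonneg _)
    ((norm_apply_le_lpSeminorm v i).trans (lpSeminorm_eq_pNorm p v ▸ hv.le))

end HomogeneousOfCoeffs

/-- The unconditional basis constant of the monomials in `𝒫(^m ℓ_p^n)` is at most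
`C^m (1 + n/m)^{(m-1)(1 - 1/min(p,2))}` for an absolute constant `C ≥ 1`: for every
`m`-homogeneous polynomial `∑ a_α z^α`, every choice of scalars `|ε_α| ≤ 1`, and every
`z` in the open unit ball of `ℓ_p^n`, `|∑ ε_α a_α z^α|` is bounded by this constant
times `sup_{w ∈ B} |∑ a_α w^α|`. -/
theorem unconditional_basis_constant_polynomials :
    ∃ C : ℝ, 1 ≤ C ∧ ∀ (p : ℝ≥0∞), 1 ≤ p → ∀ (m n : ℕ), 0 < m → 0 < n →
      ∀ (a ε : (Fin n → ℕ) → ℂ), (∀ α, ‖ε α‖ ≤ 1) →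
        ∀ z : Fin n → ℂ, pNorm p z < 1 →
          ‖mhEval n m (fun α => ε α * a α) z‖
            ≤ C ^ m *
                (1 + (n : ℝ) / (m : ℝ)) ^ (((m : ℝ) - 1) * (1 - 1 / (min p 2).toReal)) *
                sSup {x : ℝ | ∃ w : Fin n → ℂ, pNorm p w < 1 ∧ x = ‖mhEval n m a w‖} := by
  refine ⟨2 * Real.exp 2, by linarith [Real.one_le_exp (zero_le_two (α := ℝ))], ?_⟩
  intro p hp m n hm _ a ε hε z hz
  have : Fact (1 ≤ p) := ⟨hp⟩
  obtain ⟨d, rfl⟩ := Nat.exists_eq_add_of_lt hm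
  rw [zero_add]
  have hsup (v : Fin n → ℂ) (hv : lpSeminorm p v < 1) :
      ‖eval v (homogeneousOfCoeffs (d + 1) a)‖
        ≤ sSup {x : ℝ | ∃ w, pNorm p w < 1 ∧ x = ‖mhEval n (d + 1) a w‖} := by
    rw [eval_homogeneousOfCoeffs]
    exact norm_mhEval_le_sSup a (lpSeminorm_eq_pNorm p v ▸ hv)
  have hmajorant := eval_majorant_le_of_lpSeminorm_lt_one (isHomogeneous_homogeneousOfCoeffs a)
    hsup ((lpSeminorm_eq_pNorm p z).trans_lt hz)
  calc ‖mhEval n (d + 1) (fun α => ε α * a α) z‖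
      = ‖eval z (homogeneousOfCoeffs (d + 1) fun α => ε α * a α)‖ := by
        rw [eval_homogeneousOfCoeffs]
    _ ≤ eval (fun i => ‖z i‖) (majorant (homogeneousOfCoeffs (d + 1) a)) :=
        norm_eval_le_eval_majorant (norm_coeff_homogeneousOfCoeffs_mul_le hε) z
    _ ≤ _ := by simpa using hmajorant
end
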